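/- For each fixed real y ≥ 1 there exist constants C > 0 and c > 0 (depending only on y) such that for all x ≥ 2, |∑_{1 ≤ n ≤ x, every prime factor of n exceeds y} μ(n)| ≤ C·x·exp(−c·√(log x)). -/

import Mathlib

/-!
The Dirichlet series of `μ` is `1 / ζ(s)`, and the bound for all `n ≤ x` is the prime number theorem
for the Möbius function with the classical error term; the condition on prime factors is then
imposed one prime at a time.

*Zero-free region.* Landau's lemma (`landau`, `landau_zero`) bounds the real part of `f' / f` at the
centre of a disc from below in terms of the growth of `f`; it is proved by removing the zeros of `f`
with Blaschke-type factors and applying the Borel–Carathéodory inequality to the logarithm of the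
remaining factor. Combined with the polynomial growth of `(s - 1) ζ(s)` in `1 / 2 < re s`
(`exists_zetaReg_bound`) and the 3-4-1 inequality it yields a region
`1 - c / log (|t| + 3) ≤ re s` without zeros (`exists_zeroFree`). Borel–Carathéodory inside this
region gives `1 / ζ(s) ≪ (|t| + 3) ^ (1 / 2)` (`exists_inv_zeta_bound`).

*Perron formula.* Mellin inversion of `(1 - u)₊` expresses `∑ μ(n) (1 - n / x)` as an absolutely
convergent integral of `xˢ / (ζ(s) s (s + 1))` (`perron_moebius`). Moving the part of the contour of
height at most `exp √(log x)` into the zero-free region bounds the smoothed sum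
(`exists_smoothed_bound`), and a difference quotient bounds the Mertens function
(`exists_mertens_bound`).

*Rough numbers.* If `p` is a prime and `S`, `S'` denote the sums over integers whose prime factors
are `≥ p`, respectively `> p`, then `S(x) = S'(x) - S'(x / p)`. Iterating `S'(x) = S(x) + S'(x / p)`
costs only a constant factor, since the majorant `x exp (-c √(log x))` decreases by the factor
`3 / 4` when `x` is replaced by `x / p`. Induction over the integers up to `⌊y⌋` finishes the proof.
-/

section

open Complex Metric

/-! ### Landau's lemma on logarithmic derivatives -/

/-- Removing the zero `ρ` of `f`: the function `f₁ z = f z * (R² - ρ̄ z) / (R (z - ρ))` is again entire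
and has the same modulus as `f` on the circle `‖z‖ = R`, while its value at the centre is larger by
the factor `R / ‖ρ‖`. It acquires only the zero `R² / ρ̄`, which satisfies `‖z‖ ‖ρ‖ = R²`. -/
lemma exists_remove_zero {f : ℂ → ℂ} (hf : Differentiable ℂ f) {R B : ℝ} (hR : 0 < R)
    (hB : ∀ z, ‖z‖ = R → ‖f z‖ ≤ B) (h0 : f 0 ≠ 0) {ρ : ℂ} (hρ : f ρ = 0) :
    ∃ f₁ : ℂ → ℂ, Differentiable ℂ f₁ ∧ (∀ z, ‖z‖ = R → ‖f₁ z‖ ≤ B) ∧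
      ‖f₁ 0‖ * ‖ρ‖ = R * ‖f 0‖ ∧ (∀ z, ‖z‖ * ‖ρ‖ < R ^ 2 → f₁ z = 0 → f z = 0) ∧
      deriv f 0 / f 0 = deriv f₁ 0 / f₁ 0 + (-ρ⁻¹ + (starRingEnd ℂ) ρ / R ^ 2) := by
  have hρ0 : ρ ≠ 0 := by rintro rfl; exact h0 hρ
  have hRc : (R : ℂ) ≠ 0 := by exact_mod_cast hR.ne'
  set g := dslope f ρ with hg
  have hgd : Differentiable ℂ g := by
    rw [← differentiableOn_univ] at hf ⊢
    exact (differentiableOn_dslope (by simp)).2 hf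
  have hfg : ∀ z, f z = (z - ρ) * g z := by
    intro z
    have := sub_smul_dslope f ρ z
    rw [hρ, sub_zero, smul_eq_mul] at this
    exact this.symm
  have hg0 : g 0 ≠ 0 := by
    intro h
    apply h0; rw [hfg, h, mul_zero]
  let q : ℂ → ℂ := fun z => (R ^ 2 - (starRingEnd ℂ) ρ * z) / R
  have hq : ∀ z, HasDerivAt q (-(starRingEnd ℂ) ρ / R) z := by
    intro z
    have : HasDerivAt (fun z : ℂ => ((R:ℂ) ^ 2 - (starRingEnd ℂ) ρ * z) / R)
      ((0 - (starRingEnd ℂ) ρ * 1) / R) z :=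
      ((hasDerivAt_const z ((R:ℂ)^2)).sub ((hasDerivAt_id z).const_mul _)).div_const _
    simpa [q] using this
  have hqd : Differentiable ℂ q := fun z => (hq z).differentiableAt
  refine ⟨fun z => g z * q z, hgd.mul hqd, ?_, ?_, ?_, ?_⟩
  · intro z hz
    have : ‖q z‖ = ‖z - ρ‖ := by
      have h1 : (R : ℂ) ^ 2 = z * (starRingEnd ℂ) z := by
        rw [mul_conj, normSq_eq_norm_sq, hz]; push_cast; ring
      have h2 : q z = z * (starRingEnd ℂ) (z - ρ) / R := by
        simp only [q]; rw [h1, map_sub]; ring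
      rw [h2, norm_div, norm_mul, norm_conj, hz, norm_real, Real.norm_eq_abs, abs_of_pos hR]
      field_simp
    rw [norm_mul, this, mul_comm, ← norm_mul, ← hfg]
    exact hB z hz
  · have : q 0 = R := by simp only [q]; field_simp; ring
    simp only [this, hfg 0, norm_mul, norm_real, Real.norm_eq_abs, abs_of_pos hR, zero_sub, norm_neg]
    ring
  · intro z hz h
    rcases mul_eq_zero.1 h with h | h
    · rw [hfg, h, mul_zero]
    · exfalso
      have h3 : (R : ℂ) ^ 2 = (starRingEnd ℂ) ρ * z := by
        simp only [q] at h
        rcases div_eq_zero_iff.1 h with h | h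
        · exact sub_eq_zero.1 h
        · exact absurd h hRc
      have h4 := congrArg norm h3
      rw [norm_pow, norm_mul, norm_conj, norm_real, Real.norm_eq_abs, abs_of_pos hR] at h4
      linarith [mul_comm ‖z‖ ‖ρ‖]
  · have hgat : HasDerivAt g (deriv g 0) 0 := (hgd 0).hasDerivAt
    have e1 : deriv f 0 = g 0 + (0 - ρ) * deriv g 0 := by
      have : HasDerivAt f (1 * g 0 + (0 - ρ) * deriv g 0) 0 := by
        rw [show f = fun z => (z - ρ) * g z from funext hfg]
        exact ((hasDerivAt_id (0:ℂ)).sub_const ρ).mul hgat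
      rw [this.deriv]; ring
    have e2 : deriv (fun z => g z * q z) 0 = deriv g 0 * q 0 + g 0 * (-(starRingEnd ℂ) ρ / R) :=
      (hgat.mul (hq 0)).deriv
    have e3 : q 0 = R := by simp only [q]; field_simp; ring
    show deriv f 0 / f 0 = deriv (fun z => g z * q z) 0 / (g 0 * q 0) + _
    rw [e1, e2, e3, hfg 0]
    field_simp
    ring

/-- A zero-free function on a disc has a holomorphic logarithm there: a primitive of `f' / f`. -/
lemma exists_log_of_ne_zero {f : ℂ → ℂ} (hf : Differentiable ℂ f) {r : ℝ} (hr : 0 < r)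
    (h0 : ∀ z ∈ ball (0:ℂ) r, f z ≠ 0) :
    ∃ h : ℂ → ℂ, DifferentiableOn ℂ h (ball 0 r) ∧ h 0 = 0 ∧
      ∀ z ∈ ball (0:ℂ) r, f z = f 0 * exp (h z) := by
  have hd : DifferentiableOn ℂ (fun z => deriv f z / f z) (ball 0 r) := by
    intro z hz
    have : DifferentiableAt ℂ (deriv f) z := by
      have := hf.analyticAt z
      exact this.deriv.differentiableAt
    exact (this.div (hf z) (h0 z hz)).differentiableWithinAt
  obtain ⟨H, hH⟩ := hd.isExactOn_ball
  have h00 : (0:ℂ) ∈ ball (0:ℂ) r := by simpa using hr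
  refine ⟨fun z => H z - H 0, ?_, by simp, ?_⟩
  · exact fun z hz => ((hH z hz).differentiableAt.sub_const _).differentiableWithinAt
  · intro z hz
    have hc : ∀ w ∈ ball (0:ℂ) r, HasDerivAt (fun z => f z * exp (-(H z))) 0 w := by
      intro w hw
      refine HasDerivAt.congr_deriv ((hf w).hasDerivAt.mul ((hH w hw).neg.cexp)) ?_
      simp only [Pi.neg_apply]
      have e : f w * (deriv f w / f w) = deriv f w := mul_div_cancel₀ _ (h0 w hw)
      linear_combination -exp (-(H w)) * e
    have this : f z * exp (-(H z)) = f 0 * exp (-(H 0)) := (convex_ball (0:ℂ) r).is_const_of_fderivWithin_eq_zero (𝕜 := ℂ)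
      (f := fun z => f z * exp (-(H z)))
      (fun w hw => (hc w hw).differentiableAt.differentiableWithinAt) (by
        intro w hw
        rw [fderivWithin_of_isOpen isOpen_ball hw]
        ext
        simp [(hc w hw).hasFDerivAt.fderiv]) hz h00
    have e : f z = f z * exp (-(H z)) * exp (H z) := by
      rw [mul_assoc, ← exp_add]; simp
    rw [e, this, mul_assoc, ← exp_add]; ring_nf

lemma norm_le_of_sphere {f : ℂ → ℂ} (hf : Differentiable ℂ f) {R B : ℝ} (hR : 0 < R)
    (hB : ∀ z, ‖z‖ = R → ‖f z‖ ≤ B) {z : ℂ} (hz : ‖z‖ ≤ R) : ‖f z‖ ≤ B := by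
  apply norm_le_of_forall_mem_frontier_norm_le (U := ball (0:ℂ) R) isBounded_ball
    hf.diffContOnCl
  · intro w hw
    rw [frontier_ball _ hR.ne'] at hw
    exact hB w (by simpa using hw)
  · rw [closure_ball _ hR.ne']; simpa using hz

/-- The Borel–Carathéodory inequality applied to the logarithm `h` of `f / f 0`, whose real part is at
most `log (B / ‖f 0‖)`. -/
lemma exp_borelCaratheodory {f : ℂ → ℂ} (hf : Differentiable ℂ f) {r B : ℝ} (hr : 0 < r)
    (h0 : ∀ z ∈ ball (0:ℂ) r, f z ≠ 0) (hB : ∀ z ∈ ball (0:ℂ) r, ‖f z‖ ≤ B)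
    (hB1 : ‖f 0‖ < B) :
    ∃ h : ℂ → ℂ, DifferentiableOn ℂ h (ball 0 r) ∧
      (∀ z ∈ ball (0:ℂ) r, f z = f 0 * exp (h z)) ∧
      ∀ z ∈ ball (0:ℂ) r, ‖h z‖ ≤ 2 * Real.log (B / ‖f 0‖) * ‖z‖ / (r - ‖z‖) := by
  obtain ⟨h, hd, hh0, hfe⟩ := exists_log_of_ne_zero hf hr h0
  refine ⟨h, hd, hfe, fun z hz => ?_⟩
  have hf0 : 0 < ‖f 0‖ := norm_pos_iff.2 (h0 0 (by simpa using hr))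
  refine borelCaratheodory_zero (Real.log_pos ((one_lt_div hf0).2 hB1)) hd ?_ hr hz hh0
  intro w hw
  have h1 := hB w hw
  rw [hfe w hw, norm_mul, norm_exp] at h1
  show (h w).re ≤ _
  rw [Real.le_log_iff_exp_le (by have := hf0.trans hB1; positivity), le_div_iff₀ hf0]
  linarith

/-- Zero-free case of `landau`: the Cauchy estimate on `‖z‖ = r / 2` for the logarithm of `f / f 0`. -/
lemma re_logDeriv_ge_of_ne_zero {f : ℂ → ℂ} (hf : Differentiable ℂ f) {r B : ℝ} (hr : 0 < r)
    (h0 : ∀ z ∈ ball (0:ℂ) r, f z ≠ 0) (hB : ∀ z ∈ ball (0:ℂ) r, ‖f z‖ ≤ B)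
    (hB1 : ‖f 0‖ < B) :
    -(4 / r * Real.log (B / ‖f 0‖)) ≤ (deriv f 0 / f 0).re := by
  obtain ⟨h, hd, hfe, hb⟩ := exp_borelCaratheodory hf hr h0 hB hB1
  have h00 : (0:ℂ) ∈ ball (0:ℂ) r := by simpa using hr
  have hf0 := h0 0 h00
  set M := Real.log (B / ‖f 0‖)
  have hda : HasDerivAt h (deriv h 0) 0 :=
    (hd.differentiableAt (isOpen_ball.mem_nhds h00)).hasDerivAt
  have hh0 : h 0 = 0 := by
    have := hb 0 h00
    simpa using this
  have e : deriv f 0 = f 0 * deriv h 0 := by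
    have h1 : f =ᶠ[nhds 0] fun z => f 0 * exp (h z) :=
      Filter.eventuallyEq_of_mem (isOpen_ball.mem_nhds h00) hfe
    rw [h1.deriv_eq, (hda.cexp.const_mul (f 0)).deriv, hh0]; simp
  rw [e, mul_div_cancel_left₀ _ hf0]
  have hc : ‖deriv h 0‖ ≤ 2 * M / (r / 2) := by
    apply norm_deriv_le_of_forall_mem_sphere_norm_le (by positivity)
    · apply (hd.mono _).diffContOnCl
      rw [closure_ball _ (by positivity)]
      exact closedBall_subset_ball (by linarith)
    · intro z hz
      have hz : ‖z‖ = r / 2 := by simpa using hz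
      have := hb z (by simp [hz]; linarith)
      rw [hz] at this
      convert this using 1
      field_simp; norm_num
  have : 2 * M / (r / 2) = 4 / r * M := by field_simp; ring
  have h5 := neg_abs_le (deriv h 0).re
  have h6 := abs_re_le_norm (deriv h 0)
  linarith

/-- The contribution of one removed zero to `re (f' / f) (0)` is nonnegative when the zero lies to the
left of the centre, so such zeros may be discarded in a lower bound. -/
lemma re_zero_term_nonneg {ρ : ℂ} {R : ℝ} (h1 : ρ.re ≤ 0) (h2 : ‖ρ‖ ≤ R) :
    0 ≤ (-ρ⁻¹ + (starRingEnd ℂ) ρ / R ^ 2).re := by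
  by_cases h0 : ρ = 0
  · simp [h0]
  have hn : 0 < ‖ρ‖ := norm_pos_iff.2 h0
  have : (starRingEnd ℂ) ρ / (R:ℂ) ^ 2 = ((1 / R^2 : ℝ) : ℂ) * (starRingEnd ℂ) ρ := by
    push_cast; ring
  rw [this, add_re, neg_re, inv_re, re_ofReal_mul, conj_re, normSq_eq_norm_sq]
  have h3 : 1 / R ^ 2 ≤ 1 / ‖ρ‖ ^ 2 := by gcongr
  have : -(ρ.re / ‖ρ‖ ^ 2) + 1 / R ^ 2 * ρ.re = (-ρ.re) * (1 / ‖ρ‖ ^ 2 - 1 / R ^ 2) := by ring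
  rw [this]
  apply mul_nonneg <;> linarith

/-- Lower bound for `re (f' / f) (0)` when all zeros near the centre have nonpositive real part. The
zeros in the disc of radius `r` are removed one at a time; each removal at least doubles the value
at the centre, which stays at most `B`, so the process stops after `n` steps. -/
lemma re_logDeriv_ge {r : ℝ} (hr : 0 < r) (n : ℕ) : ∀ {f : ℂ → ℂ} (_ : Differentiable ℂ f) {B : ℝ}
    (_ : ∀ z, ‖z‖ = 2 * r → ‖f z‖ ≤ B) (_ : f 0 ≠ 0)
    (_ : ∀ z ∈ ball (0:ℂ) r, f z = 0 → z.re ≤ 0) (_ : ‖f 0‖ < B) (_ : B < 2 ^ n * ‖f 0‖),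
    -(4 / r * Real.log (B / ‖f 0‖)) ≤ (deriv f 0 / f 0).re := by
  induction n with
  | zero => intro f _ B _ _ _ h1 h2; simp at h2; linarith
  | succ n ih =>
    intro f hf B hB h0 hz hB1 hBn
    by_cases hne : ∀ z ∈ ball (0:ℂ) r, f z ≠ 0
    · refine re_logDeriv_ge_of_ne_zero hf hr hne (fun z hz => ?_) hB1
      refine norm_le_of_sphere hf (by positivity) hB ?_
      have : ‖z‖ < r := by simpa using hz
      linarith
    · push Not at hne
      obtain ⟨ρ, hρr, hρ⟩ := hne
      have hρn : ‖ρ‖ < r := by simpa using hρr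
      obtain ⟨f₁, hf₁, hB₁, hn, hz₁, hd⟩ := exists_remove_zero hf (by positivity) hB h0 hρ
      have hρ0 : 0 < ‖ρ‖ := norm_pos_iff.2 (by rintro rfl; exact h0 hρ)
      have hf0 : 0 < ‖f 0‖ := norm_pos_iff.2 h0
      have h2 : 2 * ‖f 0‖ ≤ ‖f₁ 0‖ := by
        by_contra hcon
        push Not at hcon
        have : ‖f₁ 0‖ * ‖ρ‖ < 2 * ‖f 0‖ * r := by
          apply mul_lt_mul'' hcon hρn <;> positivity
        nlinarith
      have hf₁0 : 0 < ‖f₁ 0‖ := by linarith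
      have hle : ‖f₁ 0‖ ≤ B := norm_le_of_sphere hf₁ (by positivity) hB₁ (by simp; linarith)
      have hre := re_zero_term_nonneg (ρ := ρ) (R := 2 * r) (hz ρ hρr hρ)
        (by linarith)
      rw [hd, add_re]
      have hlog : Real.log (B / ‖f₁ 0‖) ≤ Real.log (B / ‖f 0‖) := by
        apply Real.log_le_log
        · have := hf0.trans hB1; positivity
        · have := hf0.trans hB1
          gcongr; linarith
      have hlog' := mul_le_mul_of_nonneg_left hlog (by positivity : 0 ≤ 4 / r)
      have hz₁' : ∀ z ∈ ball (0:ℂ) r, f₁ z = 0 → z.re ≤ 0 := by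
        intro z hzr hz0
        refine hz z hzr (hz₁ z ?_ hz0)
        have : ‖z‖ < r := by simpa using hzr
        have := norm_nonneg z
        nlinarith
      rcases hle.lt_or_eq with hlt | heq
      · have := ih hf₁ hB₁ (norm_pos_iff.1 hf₁0) hz₁' hlt (by
          rw [pow_succ] at hBn
          have : (2:ℝ) ^ n * (2 * ‖f 0‖) ≤ 2 ^ n * ‖f₁ 0‖ := by gcongr
          linarith)
        push_cast at hre this ⊢
        linarith
      · -- maximum attained at the centre: `f₁` is constant
        have hcst : Set.EqOn f₁ (Function.const ℂ (f₁ 0)) (closedBall 0 (2 * r)) := by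
          apply eqOn_closedBall_of_isMaxOn_norm hf₁.diffContOnCl
          intro z hz
          simp only [Function.comp, Set.mem_ofPred_eq]
          rw [heq]
          exact norm_le_of_sphere hf₁ (by positivity) hB₁ (le_of_lt (by simpa using hz))
        have hder : deriv f₁ 0 = 0 := by
          have : f₁ =ᶠ[nhds 0] Function.const ℂ (f₁ 0) :=
            Filter.eventuallyEq_of_mem (closedBall_mem_nhds 0 (by positivity)) hcst
          rw [this.deriv_eq]; exact deriv_const _ _
        rw [hder]
        have : 0 ≤ Real.log (B / ‖f 0‖) := Real.log_nonneg ((one_le_div hf0).2 hB1.le)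
        have h9 : 0 ≤ 4 / r * Real.log (B / ‖f 0‖) := by positivity
        push_cast at hre ⊢
        simp only [zero_div, zero_re]
        linarith

/-- Landau's lemma: the form of `re_logDeriv_ge` without the auxiliary strict inequalities, obtained by
letting the bound decrease to `B`. -/
lemma landau {r : ℝ} (hr : 0 < r) {f : ℂ → ℂ} (hf : Differentiable ℂ f) {B : ℝ}
    (hB : ∀ z, ‖z‖ = 2 * r → ‖f z‖ ≤ B) (h0 : f 0 ≠ 0)
    (hz : ∀ z ∈ ball (0:ℂ) r, f z = 0 → z.re ≤ 0) :
    -(4 / r * Real.log (B / ‖f 0‖)) ≤ (deriv f 0 / f 0).re := by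
  have hf0 : 0 < ‖f 0‖ := norm_pos_iff.2 h0
  have hle : ‖f 0‖ ≤ B := norm_le_of_sphere hf (by positivity) hB (by simp; linarith)
  have hBpos : 0 < B := hf0.trans_le hle
  have hcont : ContinuousWithinAt (fun b => -(4 / r * Real.log (b / ‖f 0‖))) (Set.Ioi B) B := by
    apply ContinuousAt.continuousWithinAt
    have : B / ‖f 0‖ ≠ 0 := by positivity
    fun_prop (disch := assumption)
  refine le_of_tendsto hcont ?_
  filter_upwards [self_mem_nhdsWithin] with b hb
  have hb : B < b := hb
  obtain ⟨n, hn⟩ := pow_unbounded_of_one_lt (b / ‖f 0‖) (one_lt_two : (1:ℝ) < 2)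
  exact re_logDeriv_ge hr n hf (fun z hz => (hB z hz).trans hb.le) h0 hz (by linarith)
    ((div_lt_iff₀ hf0).1 hn)

/-- Landau's lemma keeping the contribution of one zero at distance `a` to the left of the centre. -/
lemma landau_zero {r : ℝ} (hr : 0 < r) {f : ℂ → ℂ} (hf : Differentiable ℂ f) {B : ℝ}
    (hB : ∀ z, ‖z‖ = 2 * r → ‖f z‖ ≤ B) (h0 : f 0 ≠ 0)
    (hz : ∀ z ∈ ball (0:ℂ) r, f z = 0 → z.re ≤ 0) {a : ℝ} (ha : 0 < a) (har : a < r)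
    (hfa : f (-a) = 0) :
    1 / a - a / (2 * r) ^ 2 - 4 / r * Real.log (B / ‖f 0‖) ≤ (deriv f 0 / f 0).re := by
  have hf0 : 0 < ‖f 0‖ := norm_pos_iff.2 h0
  have hBpos : 0 < B := hf0.trans_le
    (norm_le_of_sphere hf (by positivity) hB (by simp; linarith))
  obtain ⟨f₁, hf₁, hB₁, hn, hz₁, hd⟩ := exists_remove_zero hf (R := 2 * r) (by positivity) hB h0 hfa
  rw [norm_neg, norm_real, Real.norm_eq_abs, abs_of_pos ha] at hn hz₁
  have hlt : ‖f 0‖ ≤ ‖f₁ 0‖ := by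
    by_contra hcon
    push Not at hcon
    have : ‖f₁ 0‖ * a < ‖f 0‖ * r := by
      apply mul_lt_mul'' hcon har <;> positivity
    nlinarith
  have := landau hr hf₁ hB₁ (norm_pos_iff.1 (hf0.trans_le hlt)) (by
    intro z hzr hz0
    refine hz z hzr (hz₁ z ?_ hz0)
    have : ‖z‖ < r := by simpa using hzr
    have := norm_nonneg z
    nlinarith)
  have hlog : Real.log (B / ‖f₁ 0‖) ≤ Real.log (B / ‖f 0‖) := by
    apply Real.log_le_log
    · have := hf0.trans_le hlt; positivity
    · gcongr
  have hlog' := mul_le_mul_of_nonneg_left hlog (by positivity : 0 ≤ 4 / r)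
  have e : (-(-(a:ℂ))⁻¹ + (starRingEnd ℂ) (-(a:ℂ)) / ((2 * r : ℝ):ℂ) ^ 2)
      = ((1 / a - a / (2 * r) ^ 2 : ℝ) : ℂ) := by
    rw [map_neg, conj_ofReal]; push_cast; rw [inv_neg]; ring
  rw [hd, add_re, e, ofReal_re]
  linarith

/-! ### Growth of the zeta function -/

/-- The entire function `(s - 1) ζ(s)`, with its limit value `1` at `s = 1`. -/
noncomputable def zetaReg : ℂ → ℂ := Function.update (fun s => (s - 1) * riemannZeta s) 1 1

lemma zetaReg_one : zetaReg 1 = 1 := by simp [zetaReg]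

lemma zetaReg_of_ne {s : ℂ} (hs : s ≠ 1) : zetaReg s = (s - 1) * riemannZeta s := by
  simp [zetaReg, hs]

lemma differentiable_zetaReg : Differentiable ℂ zetaReg := by
  rw [← differentiableOn_univ]
  refine (differentiableOn_compl_singleton_and_continuousAt_iff (c := 1) Filter.univ_mem).1
    ⟨?_, ?_⟩
  · intro s hs
    have hs1 : s ≠ 1 := by simpa using hs
    apply DifferentiableAt.differentiableWithinAt
    have h : zetaReg =ᶠ[nhds s] fun s => (s - 1) * riemannZeta s := by
      filter_upwards [isOpen_ne.mem_nhds hs1] with w hw using zetaReg_of_ne hw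
    exact h.differentiableAt_iff.2
      ((differentiableAt_id.sub_const 1).mul (differentiableAt_riemannZeta hs1))
  · exact continuousAt_update_same.2 riemannZeta_residue_one

lemma zetaReg_ne_zero {s : ℂ} (hs : 1 ≤ s.re) : zetaReg s ≠ 0 := by
  by_cases h : s = 1
  · simp [h, zetaReg_one]
  · rw [zetaReg_of_ne h]
    exact mul_ne_zero (sub_ne_zero.2 h) (riemannZeta_ne_zero_of_one_le_re hs)

/-- The term `(s - 1) m⁻ˢ - (m¹⁻ˢ - (m + 1)¹⁻ˢ)`, `m = n + 1`, of a series for `(s - 1) ζ(s) - 1`. For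
`1 < re s` the subtracted part telescopes to `1`; unlike the Dirichlet series, this one converges
for all `s` with `1 / 2 < re s`. -/
noncomputable def zterm (n : ℕ) (s : ℂ) : ℂ :=
  (s - 1) * ((n + 1 : ℝ) : ℂ) ^ (-s) - (((n + 1 : ℝ) : ℂ) ^ (1 - s) - ((n + 2 : ℝ) : ℂ) ^ (1 - s))

/-- Since `(s - 1) u⁻ˢ` is the derivative of `-u¹⁻ˢ`, the term measures the variation of `u⁻ˢ` on
`[n + 1, n + 2]`; two applications of the mean value inequality bound it. -/
lemma norm_zterm_le (n : ℕ) {s : ℂ} (hs : 1 / 2 ≤ s.re) :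
    ‖zterm n s‖ ≤ ‖s - 1‖ * ‖s‖ * ((n + 1 : ℝ) ^ (-(3 / 2) : ℝ)) := by
  have hn : (0:ℝ) < n + 1 := by positivity
  set m : ℝ := n + 1 with hm
  have hm1 : 1 ≤ m := by rw [hm]; linarith [Nat.cast_nonneg (α := ℝ) n]
  have hs0 : s ≠ 0 := by rintro rfl; norm_num at hs
  have hpos : ∀ u ∈ Set.Icc m (m + 1), 0 < u := fun u hu => hn.trans_le hu.1
  have hp : ∀ (w : ℂ) (u : ℝ), 0 < u →
      HasDerivAt (fun u : ℝ => (u : ℂ) ^ w) (w * (u : ℂ) ^ (w - 1)) u := by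
    intro w u hu
    have := (hasDerivAt_id (u : ℂ)).cpow_const (c := w) (by
      simp [ofReal_mem_slitPlane, hu])
    simpa using this.comp_ofReal
  have h1 : ∀ u ∈ Set.Icc m (m + 1), ‖(u : ℂ) ^ (-s) - (m : ℂ) ^ (-s)‖ ≤ ‖s‖ * m ^ (-(3 / 2) : ℝ) := by
    intro u hu
    have := (convex_Icc m (m + 1)).norm_image_sub_le_of_norm_hasDerivWithin_le
      (f := fun u : ℝ => (u : ℂ) ^ (-s)) (f' := fun u : ℝ => -s * (u : ℂ) ^ (-s - 1))
      (C := ‖s‖ * m ^ (-(3 / 2) : ℝ)) (fun v hv => (hp (-s) v (hpos v hv)).hasDerivWithinAt) (by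
        intro v hv
        rw [norm_mul, norm_neg, norm_cpow_eq_rpow_re_of_pos (hpos v hv)]
        gcongr
        simp only [sub_re, neg_re, one_re]
        calc v ^ (-s.re - 1) ≤ v ^ (-(3 / 2) : ℝ) :=
              Real.rpow_le_rpow_of_exponent_le (hm1.trans hv.1) (by linarith)
          _ ≤ m ^ (-(3 / 2) : ℝ) := Real.rpow_le_rpow_of_nonpos hn hv.1 (by norm_num))
      (Set.left_mem_Icc.2 (by linarith)) hu
    refine this.trans ?_
    have h3 : ‖u - m‖ ≤ 1 := by
      rw [Real.norm_eq_abs, abs_of_nonneg (by linarith [hu.1])]; linarith [hu.2]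
    have : 0 ≤ ‖s‖ * m ^ (-(3 / 2) : ℝ) := by positivity
    nlinarith
  have h2 := (convex_Icc m (m + 1)).norm_image_sub_le_of_norm_hasDerivWithin_le
      (f := fun u : ℝ => (u : ℂ) ^ (1 - s) - (1 - s) * (m : ℂ) ^ (-s) * u)
      (f' := fun u : ℝ => (1 - s) * ((u : ℂ) ^ (-s) - (m : ℂ) ^ (-s)))
      (C := ‖s - 1‖ * ‖s‖ * m ^ (-(3 / 2) : ℝ)) (fun v hv => by
        have h3 := (hp (1 - s) v (hpos v hv)).sub
          (((hasDerivAt_id (v : ℂ)).comp_ofReal).const_mul ((1 - s) * (m : ℂ) ^ (-s)))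
        refine (h3.congr_deriv ?_).hasDerivWithinAt
        rw [show (1 - s - 1) = -s by ring]; ring) (by
        intro v hv
        rw [norm_mul, norm_sub_rev 1 s, mul_assoc]
        gcongr
        exact h1 v hv)
      (Set.left_mem_Icc.2 (by linarith : m ≤ m + 1)) (Set.right_mem_Icc.2 (by linarith))
  have e : zterm n s = ((m + 1 : ℝ) : ℂ) ^ (1 - s) - (1 - s) * (m : ℂ) ^ (-s) * ((m + 1 : ℝ):ℂ)
      - ((m : ℂ) ^ (1 - s) - (1 - s) * (m : ℂ) ^ (-s) * m) := by
    rw [zterm, ← hm, show (n + 2 : ℝ) = m + 1 by rw [hm]; ring]; push_cast; ring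
  rw [e]
  simpa using h2

lemma summable_zbound : Summable (fun n : ℕ => ((n + 1 : ℝ) ^ (-(3 / 2) : ℝ))) := by
  have := (summable_nat_add_iff 1).2 (Real.summable_nat_rpow (p := -(3/2)).2 (by norm_num))
  simpa using this

lemma differentiable_zterm (n : ℕ) : Differentiable ℂ (zterm n) := by
  have h1 : ((n + 1 : ℝ) : ℂ) ≠ 0 := by
    exact_mod_cast (by positivity : (n + 1 : ℝ) ≠ 0)
  have h2 : ((n + 2 : ℝ) : ℂ) ≠ 0 := by
    exact_mod_cast (by positivity : (n + 2 : ℝ) ≠ 0)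
  have h3 : ∀ a : ℂ, a ≠ 0 → ∀ b : ℂ, Differentiable ℂ fun s : ℂ => a ^ (b - s) := by
    intro a ha b
    exact ((differentiable_const b).sub differentiable_id).const_cpow (Or.inl ha)
  have h4 := h3 _ h1 0
  simp only [zero_sub] at h4
  exact ((differentiable_id.sub_const 1).mul h4).sub ((h3 _ h1 1).sub (h3 _ h2 1))

lemma hasSum_zterm {s : ℂ} (hs : 1 < s.re) : HasSum (fun n => zterm n s) (zetaReg s - 1) := by
  have hs1 : s ≠ 1 := by rintro rfl; simp at hs
  have hsum : Summable (fun n => zterm n s) :=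
    Summable.of_norm_bounded (summable_zbound.mul_left _) fun n => norm_zterm_le n (by linarith)
  rw [hsum.hasSum_iff_tendsto_nat]
  have e : ∀ N : ℕ, ∑ n ∈ Finset.range N, zterm n s =
      (s - 1) * (∑ n ∈ Finset.range N, 1 / ((n:ℂ) + 1) ^ s) - (1 - ((N + 1 : ℝ) : ℂ) ^ (1 - s)) := by
    intro N
    induction N with
    | zero => simp
    | succ N ih =>
      rw [Finset.sum_range_succ, Finset.sum_range_succ, ih, zterm, cpow_neg]
      rw [show ((N + 1 : ℕ) : ℝ) + 1 = (N:ℝ) + 2 by push_cast; ring]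
      push_cast; ring
  simp_rw [e]
  have h1 : Filter.Tendsto (fun N => ∑ n ∈ Finset.range N, 1 / ((n:ℂ) + 1) ^ s) Filter.atTop
      (nhds (riemannZeta s)) := by
    rw [zeta_eq_tsum_one_div_nat_add_one_cpow hs]
    apply HasSum.tendsto_sum_nat
    apply Summable.hasSum
    have := (summable_nat_add_iff 1).2 (Complex.summable_one_div_nat_cpow.2 hs)
    simpa using this
  have h2 : Filter.Tendsto (fun N : ℕ => ((N + 1 : ℝ) : ℂ) ^ (1 - s)) Filter.atTop (nhds 0) := by
    rw [tendsto_zero_iff_norm_tendsto_zero]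
    have : ∀ N : ℕ, ‖((N + 1 : ℝ) : ℂ) ^ (1 - s)‖ = (N + 1 : ℝ) ^ (-(s.re - 1)) := by
      intro N
      rw [norm_cpow_eq_rpow_re_of_pos (by positivity)]; simp
    simp_rw [this]
    exact (tendsto_rpow_neg_atTop (by linarith : 0 < s.re - 1)).comp
      (Filter.tendsto_atTop_add_const_right _ _ tendsto_natCast_atTop_atTop)
  have h3 := (h1.const_mul (s - 1)).sub (h2.const_sub 1)
  rw [zetaReg_of_ne hs1]
  simpa using h3

/-- The series representation extends to `1 / 2 < re s` by the identity theorem. -/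
lemma zetaReg_eq_tsum {s : ℂ} (hs : 1 / 2 < s.re) : zetaReg s = 1 + ∑' n, zterm n s := by
  have hopen : IsOpen {s : ℂ | 1 / 2 < s.re} := isOpen_lt continuous_const continuous_re
  have hdiff : DifferentiableOn ℂ (fun s => ∑' n, zterm n s) {s : ℂ | 1 / 2 < s.re} := by
    intro s₀ hs₀
    -- local uniform convergence on a bounded piece of the half-plane
    have hU : IsOpen ({s : ℂ | 1 / 2 < s.re} ∩ ball s₀ 1) := hopen.inter isOpen_ball
    have : DifferentiableOn ℂ (fun s => ∑' n, zterm n s) ({s : ℂ | 1 / 2 < s.re} ∩ ball s₀ 1) := by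
      refine differentiableOn_tsum_of_summable_norm
        (u := fun n : ℕ => ((‖s₀‖ + 2) * (‖s₀‖ + 2)) * ((n + 1 : ℝ) ^ (-(3 / 2) : ℝ)))
        (summable_zbound.mul_left _) (fun n => (differentiable_zterm n).differentiableOn) hU ?_
      rintro n s ⟨h1, h2⟩
      refine (norm_zterm_le n (le_of_lt h1)).trans ?_
      have h3 : ‖s‖ ≤ ‖s₀‖ + 1 := by
        have h4 : ‖s - s₀‖ < 1 := by simpa [dist_eq_norm] using h2
        have := norm_add_le s₀ (s - s₀)
        simp at this; linarith
      have h5 : ‖s - 1‖ ≤ ‖s‖ + 1 := by simpa using norm_sub_le s 1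
      gcongr <;> linarith
    exact (this.differentiableAt (hU.mem_nhds ⟨hs₀, mem_ball_self one_pos⟩)).differentiableWithinAt
  have h1 : AnalyticOnNhd ℂ zetaReg {s : ℂ | 1 / 2 < s.re} :=
    differentiable_zetaReg.differentiableOn.analyticOnNhd hopen
  have h2 : AnalyticOnNhd ℂ (fun s => 1 + ∑' n, zterm n s) {s : ℂ | 1 / 2 < s.re} :=
    (hdiff.const_add 1).analyticOnNhd hopen
  have hconn : IsPreconnected {s : ℂ | 1 / 2 < s.re} := (convex_halfSpace_re_gt _).isPreconnected
  refine h1.eqOn_of_preconnected_of_eventuallyEq h2 hconn (z₀ := 2) (by norm_num) ?_ hs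
  filter_upwards [(isOpen_lt continuous_const continuous_re).mem_nhds
    (show (2:ℂ) ∈ {s : ℂ | 1 < s.re} by norm_num)] with s hs
  rw [(hasSum_zterm hs).tsum_eq]; ring

/-- Polynomial growth of `(s - 1) ζ(s)` in the half-plane `1 / 2 < re s`. -/
lemma exists_zetaReg_bound : ∃ K : ℝ, 1 ≤ K ∧ ∀ s : ℂ, 1 / 2 < s.re →
    ‖zetaReg s‖ ≤ K * (‖s‖ + 1) ^ 2 := by
  set S := ∑' n : ℕ, ((n + 1 : ℝ) ^ (-(3 / 2) : ℝ)) with hS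
  have hS0 : 0 ≤ S := tsum_nonneg fun n => by positivity
  refine ⟨1 + S, by linarith, fun s hs => ?_⟩
  rw [zetaReg_eq_tsum hs]
  have h1 : ‖∑' n, zterm n s‖ ≤ ‖s - 1‖ * ‖s‖ * S := by
    rw [hS, ← tsum_mul_left]
    exact tsum_of_norm_bounded (summable_zbound.mul_left _).hasSum
      fun n => norm_zterm_le n hs.le
  have h5 : ‖s - 1‖ ≤ ‖s‖ + 1 := by simpa using norm_sub_le s 1
  have h6 : ‖1 + ∑' n, zterm n s‖ ≤ 1 + ‖∑' n, zterm n s‖ := by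
    simpa using norm_add_le 1 (∑' n, zterm n s)
  have h7 : ‖s - 1‖ * ‖s‖ * S ≤ (‖s‖ + 1) * (‖s‖ + 1) * S := by gcongr; linarith
  nlinarith [norm_nonneg s]

/-! ### Discs near the line `re s = 1` and the 3-4-1 inequality -/

/-- The quantity `log (|t| + 3) ≥ 1` that governs all estimates at height `t`. -/
noncomputable def logT (t : ℝ) : ℝ := Real.log (|t| + 3)

lemma one_le_logT (t : ℝ) : 1 ≤ logT t := by
  rw [logT, Real.le_log_iff_exp_le (by positivity)]
  linarith [Real.exp_one_lt_d9, abs_nonneg t]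

lemma logT_two_mul_le (t : ℝ) : logT (2 * t) ≤ 2 * logT t := by
  have : 2 * logT t = Real.log ((|t| + 3) ^ 2) := by rw [Real.log_pow, logT]; norm_num
  rw [this, logT, abs_mul, abs_two]
  apply Real.log_le_log (by positivity)
  nlinarith [abs_nonneg t]

/-- `|1 / ζ(σ + it)| = |∑ μ(n) n⁻ˢ| ≤ ζ(σ)` for `σ > 1`. -/
lemma norm_inv_zeta_le {s : ℂ} (hs : 1 < s.re) :
    ‖(riemannZeta s)⁻¹‖ ≤ ‖riemannZeta s.re‖ := by
  have hmul := LSeries_one_mul_Lseries_moebius hs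
  rw [LSeries_one_eq_riemannZeta hs] at hmul
  rw [inv_eq_of_mul_eq_one_right hmul]
  have hre : 1 < (s.re : ℂ).re := by simpa using hs
  have hsum : Summable (fun n : ℕ => 1 / (n : ℝ) ^ s.re) := Real.summable_one_div_nat_rpow.2 hs
  have hz : riemannZeta s.re = ((∑' n : ℕ, 1 / (n : ℝ) ^ s.re : ℝ) : ℂ) := by
    rw [zeta_eq_tsum_one_div_nat_cpow hre, ofReal_tsum]
    congr 1; ext n
    rw [ofReal_div, ofReal_cpow (by positivity)]; simp
  have hz0 : 0 ≤ ∑' n : ℕ, 1 / (n : ℝ) ^ s.re := tsum_nonneg fun n => by positivity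
  rw [hz, norm_real, Real.norm_eq_abs, abs_of_nonneg hz0]
  refine tsum_of_norm_bounded hsum.hasSum fun n => ?_
  rw [LSeries.norm_term_eq]
  split_ifs with h
  · subst h; positivity
  · gcongr
    rw [norm_intCast]
    exact_mod_cast ArithmeticFunction.abs_moebius_le_one

/-- Lower bound for `ζ` to the right of the line `re s = 1`, of the form `σ - 1 ≪ |ζ(s)|`. -/
lemma exists_zetaReg_lower : ∃ K : ℝ, 1 ≤ K ∧ ∀ s : ℂ, 1 < s.re → s.re ≤ 2 →
    (s.re - 1) * ‖s - 1‖ ≤ K * ‖zetaReg s‖ := by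
  obtain ⟨K, hK, hb⟩ := exists_zetaReg_bound
  refine ⟨9 * K, by linarith, fun s hs hs2 => ?_⟩
  have hs1 : s ≠ 1 := by rintro rfl; simp at hs
  have hs1' : (s.re : ℂ) ≠ 1 := by
    intro h; have : s.re = 1 := by exact_mod_cast h
    linarith
  have h1 := norm_inv_zeta_le hs
  have hz : riemannZeta s ≠ 0 := riemannZeta_ne_zero_of_one_le_re hs.le
  have h2 := hb s.re (by simp; linarith)
  rw [zetaReg_of_ne hs1', norm_mul] at h2
  have h3 : ‖(s.re : ℂ) - 1‖ = s.re - 1 := by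
    rw [← ofReal_one, ← ofReal_sub, norm_real, Real.norm_eq_abs, abs_of_pos (by linarith)]
  have h4 : ‖(s.re : ℂ)‖ = s.re := by
    rw [norm_real, Real.norm_eq_abs, abs_of_pos (by linarith)]
  rw [h3, h4] at h2
  rw [zetaReg_of_ne hs1, norm_mul]
  have h5 : (s.re - 1) * ‖riemannZeta s.re‖ ≤ 9 * K := by
    have : (s.re + 1) ^ 2 ≤ 9 := by nlinarith
    nlinarith
  have h6 : s.re - 1 ≤ 9 * K * ‖riemannZeta s‖ := by
    rw [norm_inv] at h1
    have hp := norm_pos_iff.2 hz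
    have : 1 ≤ ‖riemannZeta s.re‖ * ‖riemannZeta s‖ := by
      rw [inv_le_iff_one_le_mul₀ hp] at h1; exact h1
    have h7 := mul_le_mul_of_nonneg_right h5 hp.le
    nlinarith
  nlinarith [norm_nonneg (s - 1)]

/-- Control of `zetaReg` on the disc of radius `1 / 2` about `1 + δ / logT t + i t`: an upper bound `B`
on the disc, and an estimate `≪ log |t|` for the logarithm of the ratio of `B` to the value at the
centre. These are the inputs to Landau's lemma and to Borel–Carathéodory. -/
lemma exists_disc_bounds : ∃ K A : ℝ, 1 ≤ K ∧ 1 ≤ A ∧ ∀ t δ : ℝ, 0 < δ → δ ≤ 1 / 4 →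
    (∀ z : ℂ, ‖z‖ ≤ 1 / 2 →
      ‖zetaReg (((1 + δ / logT t : ℝ) : ℂ) + t * I + z)‖ < K * (|t| + 3) ^ 2) ∧
    Real.log (K * (|t| + 3) ^ 2 / ‖zetaReg (((1 + δ / logT t : ℝ) : ℂ) + t * I)‖)
      ≤ A * (logT t + Real.log (1 / δ)) := by
  obtain ⟨K, hK, hb⟩ := exists_zetaReg_bound
  obtain ⟨K', hK', hl⟩ := exists_zetaReg_lower
  have hlK := Real.log_nonneg (by linarith : 1 ≤ 2 * K)
  have hlK' := Real.log_nonneg hK'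
  refine ⟨2 * K, Real.log (2 * K) + Real.log K' + 4, by linarith, by linarith, fun t δ hδ hδ4 => ?_⟩
  have hL := one_le_logT t
  set L := logT t with hLdef
  have hLp : 0 < L := by linarith
  have hδL : δ / L ≤ 1 / 4 := (div_le_self hδ.le hL).trans hδ4
  have hδLp : 0 < δ / L := by positivity
  set s₀ : ℂ := ((1 + δ / L : ℝ) : ℂ) + t * I with hs₀
  have hre : s₀.re = 1 + δ / L := by simp [hs₀]
  constructor
  · intro z hz
    have hzr := (abs_le.1 ((abs_re_le_norm z).trans hz)).1
    refine (hb (s₀ + z) (by rw [add_re, hre]; linarith)).trans_lt ?_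
    have h1 : ‖s₀ + z‖ ≤ (1 + δ / L) + |t| + 1 / 2 := by
      refine (norm_add_le _ _).trans (add_le_add ((norm_add_le _ _).trans ?_) hz)
      rw [norm_real, norm_mul, norm_real, norm_I, mul_one, Real.norm_eq_abs, Real.norm_eq_abs,
        abs_of_pos (by linarith : 0 < 1 + δ / L)]
    have h2 : ‖s₀ + z‖ + 1 ≤ |t| + 3 := by linarith
    have h3 : K * (‖s₀ + z‖ + 1) ^ 2 ≤ K * (|t| + 3) ^ 2 := by gcongr
    have h4 : 0 < K * (|t| + 3) ^ 2 := by positivity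
    linarith
  · have hZ : (δ / L) ^ 2 ≤ K' * ‖zetaReg s₀‖ := by
      refine le_trans ?_ (hl s₀ (by rw [hre]; linarith) (by rw [hre]; linarith))
      have : δ / L ≤ ‖s₀ - 1‖ := by
        have := re_le_norm (s₀ - 1)
        rw [sub_re, hre, one_re] at this; linarith
      rw [hre, sq]
      have e : 1 + δ / L - 1 = δ / L := by ring
      rw [e]; gcongr
    have hZp : 0 < ‖zetaReg s₀‖ := norm_pos_iff.2 (zetaReg_ne_zero (by rw [hre]; linarith))
    have h2 : Real.log ((δ / L) ^ 2) ≤ Real.log K' + Real.log ‖zetaReg s₀‖ := by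
      rw [← Real.log_mul (by positivity) hZp.ne']
      exact Real.log_le_log (by positivity) hZ
    rw [Real.log_pow, Real.log_div hδ.ne' hLp.ne'] at h2
    push_cast at h2
    have h3 : Real.log L ≤ L := (Real.log_le_sub_one_of_pos hLp).trans (by linarith)
    have h4 : 0 ≤ Real.log (1 / δ) := Real.log_nonneg (by rw [one_div]; exact one_le_inv_iff₀.2 ⟨hδ, by linarith⟩)
    rw [Real.log_div (by positivity) hZp.ne', Real.log_mul (by positivity) (by positivity),
      Real.log_pow, ← logT, ← hLdef]
    have h5 : Real.log (1 / δ) = - Real.log δ := by rw [one_div, Real.log_inv]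
    rw [h5] at h4 ⊢
    push_cast
    nlinarith

/-- The inequality behind the zero-free region: the coefficients `Λ(n) / n ^ σ` are nonnegative and
`3 + 4 cos θ + cos 2θ = 2 (1 + cos θ)² ≥ 0`. -/
lemma three_four_one {σ : ℝ} (hσ : 1 < σ) (t : ℝ) :
    0 ≤ 3 * (-deriv riemannZeta σ / riemannZeta σ).re +
      4 * (-deriv riemannZeta (σ + t * I) / riemannZeta (σ + t * I)).re +
      (-deriv riemannZeta (σ + (2 * t : ℝ) * I) / riemannZeta (σ + (2 * t : ℝ) * I)).re := by
  have hre : ∀ u : ℝ, 1 < ((σ : ℂ) + u * I).re := by intro u; simpa using hσ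
  have key : ∀ u : ℝ, HasSum (fun n : ℕ => ArithmeticFunction.vonMangoldt n * (n : ℝ) ^ (-σ) *
      Real.cos (u * Real.log n))
      (-deriv riemannZeta (σ + u * I) / riemannZeta (σ + u * I)).re := by
    intro u
    rw [← ArithmeticFunction.LSeries_vonMangoldt_eq_deriv_riemannZeta_div (hre u)]
    have h1 := (ArithmeticFunction.LSeriesSummable_vonMangoldt (hre u)).LSeriesHasSum
    have h2 := hasSum_re h1
    refine h2.congr_fun ?_
    intro n
    by_cases hn : n = 0
    · subst hn; simp
    · rw [LSeries.term_of_ne_zero hn]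
      have hn0 : (n : ℂ) ≠ 0 := by exact_mod_cast hn
      have hnp : (0:ℝ) < n := by positivity
      have e : (ArithmeticFunction.vonMangoldt n : ℂ) / (n : ℂ) ^ ((σ : ℂ) + u * I) =
          ((ArithmeticFunction.vonMangoldt n * (n : ℝ) ^ (-σ) : ℝ) : ℂ) *
            exp (((-(u * Real.log n) : ℝ) : ℂ) * I) := by
        rw [div_eq_mul_inv, ← cpow_neg, neg_add, cpow_add _ _ hn0, ofReal_mul, ofReal_cpow hnp.le,
          ofReal_neg, ofReal_natCast, ← mul_assoc]
        congr 1
        rw [cpow_def_of_ne_zero hn0, ← natCast_log]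
        congr 1; push_cast; ring
      rw [e, re_ofReal_mul, exp_ofReal_mul_I_re, Real.cos_neg]
  have h0 := key 0
  simp only [zero_mul, Real.cos_zero, mul_one, ofReal_zero, add_zero] at h0
  have := ((h0.mul_left 3).add ((key t).mul_left 4)).add (key (2 * t))
  refine this.nonneg ?_
  intro n
  have hc : Real.cos (2 * t * Real.log n) = 2 * Real.cos (t * Real.log n) ^ 2 - 1 := by
    rw [← Real.cos_two_mul]; ring_nf
  rw [hc]
  have h1 : 0 ≤ ArithmeticFunction.vonMangoldt n * (n : ℝ) ^ (-σ) :=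
    mul_nonneg ArithmeticFunction.vonMangoldt_nonneg (by positivity)
  have : 0 ≤ ArithmeticFunction.vonMangoldt n * (n : ℝ) ^ (-σ) *
    (2 * (1 + Real.cos (t * Real.log n)) ^ 2) := by positivity
  nlinarith

/-! ### The zero-free region -/

lemma logT_pos (t : ℝ) : 0 < logT t := by linarith [one_le_logT t]

lemma neg_logDeriv_zeta {s : ℂ} (hs : 1 < s.re) :
    -deriv riemannZeta s / riemannZeta s = -(deriv zetaReg s / zetaReg s) + 1 / (s - 1) := by
  have hs1 : s ≠ 1 := by rintro rfl; simp at hs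
  have hz : riemannZeta s ≠ 0 := riemannZeta_ne_zero_of_one_le_re hs.le
  have h : zetaReg =ᶠ[nhds s] fun s => (s - 1) * riemannZeta s := by
    filter_upwards [isOpen_ne.mem_nhds hs1] with w hw using zetaReg_of_ne hw
  have hd : deriv zetaReg s = 1 * riemannZeta s + (s - 1) * deriv riemannZeta s := by
    rw [h.deriv_eq]
    exact (((hasDerivAt_id s).sub_const 1).mul (differentiableAt_riemannZeta hs1).hasDerivAt).deriv
  rw [hd, zetaReg_of_ne hs1]
  have := sub_ne_zero.2 hs1
  field_simp
  ring

/-- Landau's lemma for `zetaReg` at the point `1 + δ / logT t + i t`, without and with the contribution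
of a zero `β + i t`. -/
lemma exists_logDeriv_bounds : ∃ A : ℝ, 1 ≤ A ∧ ∀ t δ : ℝ, 0 < δ → δ ≤ 1 / 4 →
    (-(A * (logT t + Real.log (1 / δ))) ≤
      (deriv zetaReg (((1 + δ / logT t : ℝ) : ℂ) + t * I) /
        zetaReg (((1 + δ / logT t : ℝ) : ℂ) + t * I)).re) ∧
    ∀ β : ℝ, β < 1 → 1 + δ / logT t - β < 1 / 4 → zetaReg (β + t * I) = 0 →
      1 / (1 + δ / logT t - β) - 1 - A * (logT t + Real.log (1 / δ)) ≤
      (deriv zetaReg (((1 + δ / logT t : ℝ) : ℂ) + t * I) /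
        zetaReg (((1 + δ / logT t : ℝ) : ℂ) + t * I)).re := by
  obtain ⟨K, A, hK, hA, hb⟩ := exists_disc_bounds
  refine ⟨16 * A, by linarith, fun t δ hδ hδ4 => ?_⟩
  obtain ⟨h1, h2⟩ := hb t δ hδ hδ4
  have hL := logT_pos t
  have hδL : 0 < δ / logT t := by positivity
  set σ : ℝ := 1 + δ / logT t with hσ
  set s₀ : ℂ := (σ : ℂ) + t * I with hs₀
  have hre : s₀.re = σ := by simp [hs₀]
  have hf : Differentiable ℂ (fun z => zetaReg (s₀ + z)) :=
    differentiable_zetaReg.comp (differentiable_id.const_add s₀)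
  have h0 : zetaReg (s₀ + 0) ≠ 0 := by rw [add_zero]; exact zetaReg_ne_zero (by linarith)
  have hd : deriv (fun z => zetaReg (s₀ + z)) 0 = deriv zetaReg s₀ := by
    rw [deriv_comp_const_add, add_zero]
  have hB : ∀ z : ℂ, ‖z‖ = 2 * (1 / 4) → ‖zetaReg (s₀ + z)‖ ≤ K * (|t| + 3) ^ 2 :=
    fun z hz => (h1 z (by rw [hz]; norm_num)).le
  have hzz : ∀ z ∈ ball (0:ℂ) (1 / 4), zetaReg (s₀ + z) = 0 → z.re ≤ 0 := by
    intro z _ hz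
    by_contra hcon
    push Not at hcon
    exact zetaReg_ne_zero (by rw [add_re, hre]; linarith) hz
  constructor
  · have := landau (by norm_num) hf hB h0 hzz
    simp only [hd, add_zero] at this
    linarith
  · intro β hβ hβ2 hβ0
    have := landau_zero (by norm_num) hf hB h0 hzz (a := σ - β) (by linarith) hβ2 (by
      rw [← hβ0]; congr 1; rw [hs₀]; push_cast; ring)
    simp only [hd, add_zero] at this
    have e : (σ - β) / (2 * (1 / 4)) ^ 2 = 4 * (σ - β) := by ring
    rw [e] at this
    linarith

lemma logT_mono {t u : ℝ} (h : |t| ≤ |u|) : logT t ≤ logT u := by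
  unfold logT
  gcongr

/-- The classical zero-free region away from the pole. If `β + i t` is a zero, the 3-4-1 inequality at
`σ = 1 + u`, `u = δ / logT t`, gives `4 / (σ - β) ≤ 3 / u + O(log |t|)`; for `δ` small the error is
at most `1 / (2 u)`, which forces `1 - β ≥ u / 7`. -/
lemma exists_zeroFree_high : ∃ c : ℝ, 0 < c ∧ ∀ β t : ℝ, 1 ≤ |t| → 1 - c / logT t ≤ β →
    zetaReg (β + t * I) ≠ 0 := by
  obtain ⟨A, hA, hld⟩ := exists_logDeriv_bounds
  -- the logarithmic derivative of `zetaReg` is bounded on `[1, 2]`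
  obtain ⟨K, hK⟩ : ∃ K : ℝ, ∀ σ ∈ Set.Icc (1:ℝ) 2, ‖deriv zetaReg σ / zetaReg σ‖ ≤ K := by
    apply isCompact_Icc.exists_bound_of_continuousOn
    have h1 : Continuous (deriv zetaReg) :=
      (differentiable_zetaReg.contDiff (n := 1)).continuous_deriv le_rfl
    have h2 := differentiable_zetaReg.continuous
    refine ContinuousOn.div (by fun_prop) (by fun_prop) fun σ hσ => zetaReg_ne_zero (by simpa using hσ.1)
  have hK0 : 0 ≤ K := (norm_nonneg _).trans (hK 1 (by norm_num))
  set A' := 3 * K + 9 + 96 * A with hA'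
  obtain ⟨δ, hδ, hδ8, hδA⟩ : ∃ δ : ℝ, 0 < δ ∧ δ ≤ 1 / 8 ∧ A' * (δ - δ * Real.log δ) < 1 / 2 := by
    have hc : Continuous fun δ : ℝ => A' * (δ - δ * Real.log δ) := by
      have := Real.continuous_mul_log
      fun_prop
    have h1 : ∀ᶠ δ in nhdsWithin (0:ℝ) (Set.Ioi 0), A' * (δ - δ * Real.log δ) < 1 / 2 :=
      (hc.tendsto' 0 0 (by simp)).eventually (gt_mem_nhds (by norm_num)) |>.filter_mono
        nhdsWithin_le_nhds
    have h2 : ∀ᶠ δ in nhdsWithin (0:ℝ) (Set.Ioi 0), δ ∈ Set.Ioc (0:ℝ) (1 / 8) :=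
      Ioc_mem_nhdsGT (by norm_num)
    obtain ⟨δ, h3, h4⟩ := (h1.and h2).exists
    exact ⟨δ, h4.1, h4.2, h3⟩
  refine ⟨δ / 14, by positivity, fun β t ht hβ hzero => ?_⟩
  have hL1 := one_le_logT t
  have hL := logT_pos t
  have hβ1 : β < 1 := by
    by_contra hcon
    exact zetaReg_ne_zero (by simpa using hcon) hzero
  have hmono : logT t ≤ logT (2 * t) := logT_mono (by rw [abs_mul, abs_two]; linarith [abs_nonneg t])
  have hdouble := logT_two_mul_le t
  obtain ⟨-, h1⟩ := hld t δ hδ (by linarith)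
  have hδL : δ / logT t ≤ δ := div_le_self hδ.le hL1
  have e14 : δ / 14 / logT t = δ / logT t / 14 := by ring
  rw [e14] at hβ
  have hu : 0 < δ / logT t := by positivity
  have h1 := h1 β hβ1 (by linarith) hzero
  -- the disc at height `2t` uses the parameter `δ' ∈ [δ, 2δ]` giving the same abscissa
  set δ' := δ * (logT (2 * t) / logT t) with hδ'
  have hr1 : 1 ≤ logT (2 * t) / logT t := (one_le_div hL).2 hmono
  have hr2 : logT (2 * t) / logT t ≤ 2 := (div_le_iff₀ hL).2 hdouble
  have hδδ' : δ ≤ δ' := by rw [hδ']; nlinarith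
  obtain ⟨h2, -⟩ := hld (2 * t) δ' (by linarith) (by rw [hδ']; nlinarith)
  have hab : δ' / logT (2 * t) = δ / logT t := by
    have := logT_pos (2 * t)
    rw [hδ']; field_simp
  rw [hab] at h2
  set u := δ / logT t with hudef
  have h341 := three_four_one (σ := 1 + u) (by linarith) t
  have hrepos : ∀ v : ℝ, 1 < (((1 + u : ℝ) : ℂ) + v * I).re := by intro v; simp; linarith
  rw [neg_logDeriv_zeta (hrepos t), neg_logDeriv_zeta (hrepos (2 * t)),
    neg_logDeriv_zeta (by simpa using hu)] at h341
  simp only [add_re, neg_re] at h341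
  have hre1 : (1 / (((1 + u : ℝ) : ℂ) - 1)).re = 1 / u := by
    rw [← ofReal_one, ← ofReal_sub, ← ofReal_div, ofReal_re]; ring
  have hre2 : ∀ v : ℝ, 1 ≤ |v| → (1 / (((1 + u : ℝ) : ℂ) + v * I - 1)).re ≤ 1 := by
    intro v hv
    refine (re_le_norm _).trans ?_
    rw [norm_div, norm_one]
    apply div_le_one_of_le₀ _ (norm_nonneg _)
    refine hv.trans ?_
    have := abs_im_le_norm (((1 + u : ℝ) : ℂ) + v * I - 1)
    simpa using this
  have e1 := hre2 t ht
  have e2 := hre2 (2 * t) (by rw [abs_mul, abs_two]; linarith)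
  have e3 : -K ≤ (deriv zetaReg ((1 + u : ℝ) : ℂ) / zetaReg ((1 + u : ℝ) : ℂ)).re := by
    have := hK (1 + u) ⟨by linarith, by linarith⟩
    have h5 := abs_re_le_norm (deriv zetaReg ((1 + u : ℝ) : ℂ) / zetaReg ((1 + u : ℝ) : ℂ))
    linarith [neg_abs_le (deriv zetaReg ((1 + u : ℝ) : ℂ) / zetaReg ((1 + u : ℝ) : ℂ)).re]
  rw [hre1] at h341
  have hlog' : Real.log (1 / δ') ≤ Real.log (1 / δ) := by
    apply Real.log_le_log (by have := hδ.trans_le hδδ'; positivity)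
    gcongr
  have hlogδ : 0 ≤ Real.log (1 / δ) := Real.log_nonneg (by rw [one_div]; exact one_le_inv_iff₀.2 ⟨hδ, by linarith⟩)
  set ℓ := Real.log (1 / δ) with hℓ
  have hℓ' : ℓ = - Real.log δ := by rw [hℓ, one_div, Real.log_inv]
  have h2' : -(A * (2 * logT t + ℓ)) ≤
      (deriv zetaReg (((1 + u : ℝ) : ℂ) + (2 * t : ℝ) * I) /
        zetaReg (((1 + u : ℝ) : ℂ) + (2 * t : ℝ) * I)).re := by
    refine le_trans ?_ h2
    have : A * (logT (2 * t) + Real.log (1 / δ')) ≤ A * (2 * logT t + ℓ) := by gcongr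
    linarith
  have h6 : 4 * (1 / (1 + u - β)) ≤ 3 * (1 / u) + (3 * K + 9 + 6 * A * logT t + 5 * A * ℓ) := by
    linarith
  have h7 : 3 * K + 9 + 6 * A * logT t + 5 * A * ℓ ≤ A' * logT t * (1 + ℓ) := by
    have hx : 0 ≤ logT t - 1 := by linarith
    rw [hA']
    have p1 : 0 ≤ (logT t - 1) * (3 * K + 9) := by positivity
    have p2 : 0 ≤ logT t * ℓ * (3 * K + 9) := by positivity
    have p3 : 0 ≤ A * logT t := by positivity
    have p4 : 0 ≤ A * (logT t - 1) * ℓ := by positivity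
    have p5 : 0 ≤ A * ℓ := by positivity
    nlinarith
  have h8 : A' * logT t * (1 + ℓ) ≤ 1 / 2 * (1 / u) := by
    have e : A' * logT t * (1 + ℓ) = A' * (δ - δ * Real.log δ) * (1 / u) := by
      rw [hℓ', hudef]; field_simp; ring
    rw [e]
    gcongr
  have h9 : 4 * (1 / (1 + u - β)) ≤ 7 / 2 * (1 / u) := by linarith
  have ha : 0 < 1 + u - β := by linarith
  have h10 : 4 * u ≤ 7 / 2 * (1 + u - β) := by
    have := mul_le_mul_of_nonneg_right h9 (by positivity : 0 ≤ u * (1 + u - β))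
    have e1 : 4 * (1 / (1 + u - β)) * (u * (1 + u - β)) = 4 * u := by field_simp
    have e2 : 7 / 2 * (1 / u) * (u * (1 + u - β)) = 7 / 2 * (1 + u - β) := by field_simp
    linarith
  linarith

/-- The classical zero-free region of the zeta function. Heights `|t| ≤ 1` are handled by compactness
and the nonvanishing of `ζ` on the line `re s = 1`. -/
lemma exists_zeroFree : ∃ c : ℝ, 0 < c ∧ c ≤ 1 / 2 ∧ ∀ s : ℂ, 1 - c / logT s.im ≤ s.re →
    zetaReg s ≠ 0 := by
  obtain ⟨c, hc, hz⟩ := exists_zeroFree_high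
  -- compactness at low height
  obtain ⟨ε, hε, hlow⟩ : ∃ ε : ℝ, 0 < ε ∧ ∀ s : ℂ, |s.im| ≤ 1 → 1 - ε < s.re → zetaReg s ≠ 0 := by
    let S : Set ℂ := (Set.Icc (0:ℝ) 1 ×ℂ Set.Icc (-1:ℝ) 1) ∩ {s | zetaReg s = 0}
    have hS : IsCompact S := (isCompact_Icc.reProdIm isCompact_Icc).inter_right
      (isClosed_eq differentiable_zetaReg.continuous continuous_const)
    rcases S.eq_empty_or_nonempty with hE | hne
    · refine ⟨1, one_pos, fun s h1 h2 h3 => ?_⟩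
      have h4 : s.re < 1 := by
        by_contra hcon; exact zetaReg_ne_zero (by linarith) h3
      have : s ∈ S := ⟨⟨⟨by linarith, h4.le⟩, abs_le.1 h1⟩, h3⟩
      rw [hE] at this; exact this
    · obtain ⟨s₁, hs₁, hmax⟩ := hS.exists_isMaxOn hne continuous_re.continuousOn
      have h5 : s₁.re < 1 := by
        by_contra hcon; exact zetaReg_ne_zero (by linarith) hs₁.2
      have h50 : 0 ≤ s₁.re := hs₁.1.1.1
      refine ⟨1 - s₁.re, by linarith, fun s h1 h2 h3 => ?_⟩
      have h4 : s.re < 1 := by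
        by_contra hcon; exact zetaReg_ne_zero (by linarith) h3
      have hsS : s ∈ S := ⟨⟨⟨by linarith, h4.le⟩, abs_le.1 h1⟩, h3⟩
      have : s.re ≤ s₁.re := hmax hsS
      linarith
  refine ⟨min (1 / 2) (min c (ε / 2)), by positivity, min_le_left _ _, fun s hs => ?_⟩
  have hL := one_le_logT s.im
  have hLp := logT_pos s.im
  rcases le_total 1 |s.im| with h | h
  · have := hz s.re s.im h (le_trans ?_ hs)
    · rwa [re_add_im] at this
    · have : min (1 / 2) (min c (ε / 2)) ≤ c := (min_le_right _ _).trans (min_le_left _ _)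
      gcongr
  · apply hlow s h
    refine lt_of_lt_of_le ?_ hs
    have h1 : min (1 / 2) (min c (ε / 2)) ≤ ε / 2 := (min_le_right _ _).trans (min_le_right _ _)
    have h2 : min (1 / 2) (min c (ε / 2)) / logT s.im ≤ min (1 / 2) (min c (ε / 2)) :=
      div_le_self (by positivity) hL
    linarith

/-! ### A bound for the reciprocal of zeta -/

lemma logT_le_two_mul {t u : ℝ} (h : |u - t| ≤ 1) : logT u ≤ 2 * logT t := by
  have e : 2 * logT t = Real.log ((|t| + 3) ^ 2) := by rw [Real.log_pow, logT]; norm_num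
  have h1 : |u| ≤ |t| + 1 := by
    have := abs_sub_abs_le_abs_sub u t
    linarith
  rw [e, logT]
  apply Real.log_le_log (by positivity)
  nlinarith [abs_nonneg t]

/-- A bound `1 / ζ(s) ≪ (|t| + 3) ^ (1 / 2)` just inside the zero-free region. To the right of
`1 + c / logT t` this is `exists_zetaReg_lower`; to the left, Borel–Carathéodory on a disc of radius
proportional to `1 / logT t` inside the zero-free region bounds `log (ζ(s) / ζ(s₀))`. The exponent
`1 / 2` stands for any fixed number below `1`, which is all that the convergence of the contour
integral requires. -/
lemma exists_inv_zeta_bound : ∃ c C : ℝ, 0 < c ∧ c ≤ 1 / 4 ∧ 0 < C ∧ ∀ σ t : ℝ,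
    1 - c / logT t ≤ σ → σ ≤ 2 → zetaReg (σ + t * I) ≠ 0 ∧
      ‖(σ : ℂ) + t * I - 1‖ ≤ C * Real.exp (logT t / 2) * ‖zetaReg (σ + t * I)‖ := by
  obtain ⟨c0, hc0, hc02, hzf⟩ := exists_zeroFree
  obtain ⟨K, A, hK, hA, hdisc⟩ := exists_disc_bounds
  obtain ⟨K', hK', hlow⟩ := exists_zetaReg_lower
  have hcA : c0 / (64 * A) ≤ 1 / 128 := by
    rw [div_le_div_iff₀ (by positivity) (by norm_num)]; nlinarith
  -- with this choice the Borel–Carathéodory bound for the logarithm is at most `logT t / 4 + O(1)`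
  obtain ⟨c1, hc1⟩ : ∃ c1, c1 = c0 / (64 * A) := ⟨_, rfl⟩
  rw [← hc1] at hcA
  have hc1p : 0 < c1 := by rw [hc1]; positivity
  have hc1c0 : c1 ≤ c0 / 64 := by
    rw [hc1]; gcongr; linarith
  have hlc1 : 0 ≤ Real.log (1 / c1) := Real.log_nonneg (by
    rw [le_div_iff₀ hc1p]; linarith)
  obtain ⟨E, hE⟩ : ∃ E, E = Real.exp (Real.log (1 / c1) / 4) := ⟨_, rfl⟩
  have hE1 : 1 ≤ E := by rw [hE]; exact Real.one_le_exp (by positivity)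
  refine ⟨c1, 4 * K' * E / c1, hc1p, by linarith, by positivity, fun σ t hσ hσ2 => ?_⟩
  have hL1 := one_le_logT t
  have hL := logT_pos t
  obtain ⟨hB, hM⟩ := hdisc t c1 hc1p (by linarith)
  obtain ⟨L, hLdef⟩ : ∃ L, L = logT t := ⟨_, rfl⟩
  rw [← hLdef] at hL1 hL hB hM hσ ⊢
  have hLexp : L * Real.exp (L / 4) ≤ 4 * Real.exp (L / 2) := by
    have e : Real.exp (L / 2) = Real.exp (L / 4) * Real.exp (L / 4) := by
      rw [← Real.exp_add]; ring_nf
    rw [e]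
    have := Real.add_one_le_exp (L / 4)
    have := Real.exp_pos (L / 4)
    nlinarith
  have hcL : c1 / L ≤ c1 := div_le_self hc1p.le hL1
  have hcLp : 0 < c1 / L := by positivity
  set s : ℂ := σ + t * I with hs
  have hsre : s.re = σ := by simp [hs]
  have hsim : s.im = t := by simp [hs]
  rcases le_or_gt σ (1 + c1 / L) with hσ1 | hσ1
  · set s₀ : ℂ := ((1 + c1 / L : ℝ) : ℂ) + t * I with hs₀
    have hs₀re : s₀.re = 1 + c1 / L := by simp [hs₀]
    have hs₀im : s₀.im = t := by simp [hs₀]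
    have hr : 0 < c0 / (2 * L) := by positivity
    have hrle : c0 / (2 * L) ≤ 1 / 4 := by
      rw [div_le_iff₀ (by positivity)]; nlinarith
    have hz0 : ∀ z ∈ ball (0:ℂ) (c0 / (2 * L)), zetaReg (s₀ + z) ≠ 0 := by
      intro z hz
      rw [mem_ball_zero_iff] at hz
      apply hzf
      have him : logT (s₀ + z).im ≤ 2 * L := by
        rw [hLdef]; apply logT_le_two_mul
        rw [add_im, hs₀im, add_sub_cancel_left]
        exact (abs_im_le_norm z).trans (by linarith)
      have h1 : c0 / (2 * L) ≤ c0 / logT (s₀ + z).im := by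
        have := logT_pos (s₀ + z).im
        gcongr
      have h2 := (abs_le.1 (abs_re_le_norm z)).1
      rw [add_re, hs₀re]
      linarith
    have hfd : Differentiable ℂ (fun z => zetaReg (s₀ + z)) :=
      differentiable_zetaReg.comp (differentiable_id.const_add s₀)
    obtain ⟨h, -, hfe, hhb⟩ := exp_borelCaratheodory hfd hr hz0
      (B := K * (|t| + 3) ^ 2) (fun z hz => by
        rw [mem_ball_zero_iff] at hz
        exact (hB z (by linarith)).le) (hB 0 (by simp))
    simp only [add_zero] at hfe hhb
    set z : ℂ := ((σ - (1 + c1 / L) : ℝ) : ℂ) with hz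
    have hsz : s₀ + z = s := by
      rw [hs₀, hz, hs]; push_cast; ring
    have hzn : ‖z‖ ≤ 2 * (c1 / L) := by
      rw [hz, norm_real, Real.norm_eq_abs, abs_le]
      constructor <;> linarith
    have hrz : 2 * (c1 / L) ≤ c0 / (2 * L) / 2 := by
      have : 2 * (c0 / 64 / L) ≤ c0 / (2 * L) / 2 := by
        have e : c0 / (2 * L) / 2 - 2 * (c0 / 64 / L) = 7 / 32 * (c0 / L) := by
          field_simp; ring
        have : 0 ≤ 7 / 32 * (c0 / L) := by positivity
        linarith
      have : c1 / L ≤ c0 / 64 / L := by gcongr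
      linarith
    have hzb : z ∈ ball (0:ℂ) (c0 / (2 * L)) := by
      rw [mem_ball_zero_iff]; linarith
    have hf0 : zetaReg s₀ ≠ 0 := by simpa using hz0 0 (by simpa using hr)
    have hf0p := norm_pos_iff.2 hf0
    have hMnn : 0 ≤ Real.log (K * (|t| + 3) ^ 2 / ‖zetaReg s₀‖) := by
      apply Real.log_nonneg
      rw [one_le_div hf0p]
      simpa using (hB 0 (by simp)).le
    obtain ⟨M, hMdef⟩ : ∃ M, M = Real.log (K * (|t| + 3) ^ 2 / ‖zetaReg s₀‖) := ⟨_, rfl⟩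
    rw [← hMdef] at hhb hM hMnn
    have hh : ‖h z‖ ≤ (L + Real.log (1 / c1)) / 4 := by
      refine (hhb z hzb).trans ?_
      calc 2 * M * ‖z‖ / (c0 / (2 * L) - ‖z‖)
          ≤ 2 * M * (2 * (c1 / L)) / (c0 / (2 * L) / 2) := by
            gcongr
            linarith
        _ = M / (4 * A) := by
            rw [hc1]; field_simp; ring
        _ ≤ _ := by
            rw [div_le_div_iff₀ (by positivity) (by norm_num)]
            linarith
    have hfz := hfe z hzb
    rw [hsz] at hfz
    have hexp : 1 ≤ Real.exp (L / 4) * E * ‖exp (h z)‖ := by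
      rw [norm_exp, hE, ← Real.exp_add, ← Real.exp_add]
      apply Real.one_le_exp
      have := (abs_le.1 (abs_re_le_norm (h z))).1
      linarith
    refine ⟨hsz ▸ hz0 z hzb, ?_⟩
    have hl := hlow s₀ (by rw [hs₀re]; linarith) (by rw [hs₀re]; linarith)
    rw [hs₀re, add_sub_cancel_left] at hl
    have hss : ‖s - 1‖ ≤ ‖s₀ - 1‖ := by
      rw [norm_eq_sqrt_sq_add_sq, norm_eq_sqrt_sq_add_sq]
      apply Real.sqrt_le_sqrt
      simp only [sub_re, sub_im, one_re, one_im, hsre, hsim, hs₀re, hs₀im]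
      have : (σ - 1) ^ 2 ≤ (1 + c1 / L - 1) ^ 2 := sq_le_sq' (by linarith) (by linarith)
      linarith
    have hl2 : ‖s₀ - 1‖ ≤ K' * L / c1 * ‖zetaReg s₀‖ := by
      rw [div_mul_eq_mul_div, le_div_iff₀ hc1p]
      have : c1 / L * ‖s₀ - 1‖ * L = c1 * ‖s₀ - 1‖ := by field_simp
      nlinarith
    calc ‖s - 1‖ ≤ K' * L / c1 * ‖zetaReg s₀‖ := hss.trans hl2
      _ ≤ K' * L / c1 * ‖zetaReg s₀‖ * (Real.exp (L / 4) * E * ‖exp (h z)‖) :=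
          le_mul_of_one_le_right (by positivity) hexp
      _ = K' * E / c1 * (L * Real.exp (L / 4)) * ‖zetaReg s‖ := by
          rw [hfz, norm_mul]; ring
      _ ≤ K' * E / c1 * (4 * Real.exp (L / 2)) * ‖zetaReg s‖ := by gcongr
      _ = _ := by ring
  · have hs1 : 1 < s.re := by rw [hsre]; linarith
    refine ⟨zetaReg_ne_zero hs1.le, ?_⟩
    have hl := hlow s hs1 (by rw [hsre]; exact hσ2)
    rw [hsre] at hl
    have h1 : c1 / L * ‖s - 1‖ ≤ K' * ‖zetaReg s‖ :=
      le_trans (by gcongr; linarith) hl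
    have hl2 : ‖s - 1‖ ≤ K' * L / c1 * ‖zetaReg s‖ := by
      rw [div_mul_eq_mul_div, le_div_iff₀ hc1p]
      have : c1 / L * ‖s - 1‖ * L = c1 * ‖s - 1‖ := by field_simp
      nlinarith
    have hL4 : L ≤ L * Real.exp (L / 4) :=
      le_mul_of_one_le_right hL.le (Real.one_le_exp (by positivity))
    calc ‖s - 1‖ ≤ K' * L / c1 * ‖zetaReg s‖ := hl2
      _ ≤ K' * (4 * Real.exp (L / 2)) / c1 * ‖zetaReg s‖ := by gcongr; linarith
      _ ≤ K' * (4 * Real.exp (L / 2)) / c1 * ‖zetaReg s‖ * E :=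
          le_mul_of_one_le_right (by positivity) hE1
      _ = _ := by ring

end

section

open Complex Metric MeasureTheory

/-! ### The smoothed Perron formula -/

/-- Quadratic growth of `s (s + 1)` along vertical lines. -/
lemma one_add_sq_le_norm {σ : ℝ} (hσ : 1 / 2 ≤ σ) (t : ℝ) :
    1 + t ^ 2 ≤ 4 * ‖((σ : ℂ) + t * I) * (σ + t * I + 1)‖ := by
  have h1 : ‖(σ : ℂ) + t * I‖ ^ 2 = σ ^ 2 + t ^ 2 := by
    rw [← normSq_eq_norm_sq, normSq_add_mul_I]
  have h2 : ‖(σ : ℂ) + t * I + 1‖ ^ 2 = (σ + 1) ^ 2 + t ^ 2 := by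
    rw [← normSq_add_mul_I (σ + 1) t, normSq_eq_norm_sq]; congr 2; push_cast; ring
  rw [norm_mul]
  have h3 : ‖(σ : ℂ) + t * I‖ ≤ ‖(σ : ℂ) + t * I + 1‖ :=
    le_of_sq_le_sq (by rw [h1, h2]; nlinarith) (norm_nonneg _)
  have := norm_nonneg ((σ : ℂ) + t * I)
  nlinarith

lemma integrable_inv_kernel {σ : ℝ} (hσ : 1 / 2 ≤ σ) :
    Integrable fun t : ℝ => 1 / (((σ : ℂ) + t * I) * (σ + t * I + 1)) := by
  refine (integrable_inv_one_add_sq.const_mul 4).mono' ?_ (ae_of_all _ fun t => ?_)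
  · apply Continuous.aestronglyMeasurable
    refine Continuous.div (by fun_prop) (by fun_prop) fun t h => ?_
    have := one_add_sq_le_norm hσ t
    rw [h, norm_zero] at this
    nlinarith
  · have := one_add_sq_le_norm hσ t
    have h0 : 0 < 1 + t ^ 2 := by positivity
    rw [norm_div, norm_one, ← div_eq_mul_inv, div_le_div_iff₀ (by linarith) h0]
    linarith

/-- Mellin inversion for `(1 - u)₊`, whose Mellin transform is `1 / (s (s + 1))`. -/
lemma perron_kernel {σ : ℝ} (hσ : 1 / 2 ≤ σ) {u : ℝ} (hu : 0 < u) :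
    ∫ t : ℝ, (u : ℂ) ^ (-((σ : ℂ) + t * I)) * (1 / (((σ : ℂ) + t * I) * (σ + t * I + 1)))
      = 2 * Real.pi * (max (1 - u) 0 : ℝ) := by
  set f : ℝ → ℂ := fun t => Set.indicator (Set.Ioc 0 1) (fun _ => (1:ℂ)) t -
    Set.indicator (Set.Ioc 0 1) (fun t : ℝ => (t : ℂ) ^ (1:ℂ)) t with hf
  have hmel : ∀ s : ℂ, 0 < s.re → HasMellin f s (1 / (s * (s + 1))) := by
    intro s hs
    have h1 := hasMellin_one_Ioc hs
    have h2 := hasMellin_cpow_Ioc 1 (s := s) (by simp; linarith)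
    have h3 := hasMellin_sub h1.1 h2.1
    rw [h1.2, h2.2] at h3
    have hs0 : s ≠ 0 := by rintro rfl; simp at hs
    have hs1 : s + 1 ≠ 0 := by
      intro h; have := congrArg re h; simp at this; linarith
    have e : 1 / (s * (s + 1)) = 1 / s - 1 / (s + 1) := by field_simp; ring
    rw [e]
    exact h3
  have hfu : ∀ v : ℝ, 0 < v → f v = ((max (1 - v) 0 : ℝ) : ℂ) := by
    intro v hv
    rcases le_or_gt v 1 with h | h
    · have : v ∈ Set.Ioc (0:ℝ) 1 := ⟨hv, h⟩
      simp only [hf, Set.indicator_of_mem this, cpow_one]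
      rw [max_eq_left (by linarith)]; push_cast; rfl
    · have : v ∉ Set.Ioc (0:ℝ) 1 := fun h' => by linarith [h'.2]
      simp only [hf, Set.indicator_of_notMem this]
      rw [max_eq_right (by linarith)]; simp
  have hcont : ContinuousAt f u := by
    have h1 : ContinuousAt (fun v : ℝ => ((max (1 - v) 0 : ℝ) : ℂ)) u := by fun_prop
    refine h1.congr ?_
    filter_upwards [isOpen_Ioi.mem_nhds (show u ∈ Set.Ioi (0:ℝ) from hu)] with v hv
    exact (hfu v hv).symm
  have hre : ∀ t : ℝ, 0 < ((σ : ℂ) + t * I).re := fun t => by simp; linarith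
  have hme : ∀ t : ℝ, mellin f ((σ : ℂ) + t * I) =
      1 / (((σ : ℂ) + t * I) * (σ + t * I + 1)) := fun t => (hmel _ (hre t)).2
  have hv : VerticalIntegrable (mellin f) σ := by
    unfold VerticalIntegrable
    simp only [hme]
    exact integrable_inv_kernel hσ
  have hσr : 0 < (σ : ℂ).re := by simp; linarith
  have key := mellinInv_mellin_eq σ f hu (hmel σ hσr).1 hv hcont
  rw [hfu u hu, mellinInv] at key
  simp only [hme, smul_eq_mul] at key
  rw [← key, Complex.real_smul]
  have : (Real.pi : ℂ) ≠ 0 := by exact_mod_cast Real.pi_ne_zero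
  generalize ∫ t : ℝ, (u : ℂ) ^ (-((σ : ℂ) + t * I)) *
    (1 / (((σ : ℂ) + t * I) * (σ + t * I + 1))) = J
  push_cast
  field_simp

/-- The function `1 / (ζ(s) s (s + 1))`, written through `zetaReg` so that it is regular at `s = 1`. -/
noncomputable def perronF (s : ℂ) : ℂ := (s - 1) / zetaReg s / (s * (s + 1))

/-- Smoothed Perron formula: `∑ μ(n) (1 - n / x)` over `n ≤ x` is the integral of `xˢ / (ζ(s) s (s + 1))`
over the line `re s = κ > 1`, divided by `2π`. -/
lemma perron_moebius {κ : ℝ} (hκ : 1 < κ) {x : ℝ} (hx : 0 < x) :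
    ∫ t : ℝ, (x : ℂ) ^ ((κ : ℂ) + t * I) * perronF (κ + t * I) =
      2 * Real.pi * ((∑ n ∈ Finset.Icc 1 ⌊x⌋₊,
        (ArithmeticFunction.moebius n : ℝ) * (1 - n / x) : ℝ) : ℂ) := by
  set μ := fun n : ℕ => ((ArithmeticFunction.moebius n : ℤ) : ℂ) with hμ
  have hre : ∀ t : ℝ, 1 < ((κ : ℂ) + t * I).re := fun t => by simpa using hκ
  set F : ℕ → ℝ → ℂ := fun n t => LSeries.term μ (κ + t * I) n *
    ((x : ℂ) ^ ((κ : ℂ) + t * I) * (1 / (((κ : ℂ) + t * I) * (κ + t * I + 1)))) with hF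
  have hxc : Continuous fun t : ℝ => (x : ℂ) ^ ((κ : ℂ) + t * I) :=
    Continuous.const_cpow (by fun_prop) (Or.inl (by exact_mod_cast hx.ne'))
  have hbase : Integrable fun t : ℝ =>
      (x : ℂ) ^ ((κ : ℂ) + t * I) * (1 / (((κ : ℂ) + t * I) * (κ + t * I + 1))) := by
    refine (integrable_inv_kernel (by linarith : 1 / 2 ≤ κ)).bdd_mul (c := x ^ κ)
      hxc.aestronglyMeasurable (ae_of_all _ fun t => ?_)
    rw [norm_cpow_eq_rpow_re_of_pos hx]; simp
  have hterm_norm : ∀ (n : ℕ) (t : ℝ), ‖LSeries.term μ (κ + t * I) n‖ = ‖LSeries.term μ κ n‖ := by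
    intro n t
    rw [LSeries.norm_term_eq, LSeries.norm_term_eq]; simp
  have hterm_cont : ∀ n : ℕ, Continuous fun t : ℝ => LSeries.term μ (κ + t * I) n := by
    intro n
    rcases eq_or_ne n 0 with rfl | hn
    · simp only [LSeries.term_zero]; fun_prop
    · simp only [LSeries.term_of_ne_zero hn]
      have hn' : (n : ℂ) ≠ 0 := by exact_mod_cast hn
      refine Continuous.div (by fun_prop) (Continuous.const_cpow (by fun_prop) (Or.inl hn')) ?_
      intro t; simp [cpow_eq_zero_iff, hn']
  have hFint : ∀ n, Integrable (F n) := fun n =>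
    hbase.bdd_mul (c := ‖LSeries.term μ κ n‖) (hterm_cont n).aestronglyMeasurable
      (ae_of_all _ fun t => (hterm_norm n t).le)
  have hsummable : Summable fun n => ∫ t, ‖F n t‖ := by
    have : ∀ n, ∫ t, ‖F n t‖ = ‖LSeries.term μ κ n‖ * ∫ t : ℝ, ‖(x : ℂ) ^ ((κ : ℂ) + t * I) *
        (1 / (((κ : ℂ) + t * I) * (κ + t * I + 1)))‖ := by
      intro n
      rw [← integral_const_mul]
      congr 1; ext t
      rw [hF, norm_mul, hterm_norm]
    simp only [this]
    apply Summable.mul_right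
    apply Summable.norm
    exact ArithmeticFunction.LSeriesSummable_moebius_iff.2 (by simpa using hκ)
  have hsum := hasSum_integral_of_summable_integral_norm hFint hsummable
  have hlhs : ∀ t : ℝ, ∑' n, F n t = (x : ℂ) ^ ((κ : ℂ) + t * I) * perronF (κ + t * I) := by
    intro t
    simp only [hF]
    rw [tsum_mul_right]
    have e : ∑' n, LSeries.term μ (κ + t * I) n = LSeries μ (κ + t * I) := rfl
    have hs1 : (κ : ℂ) + t * I ≠ 1 := fun h => by have := hre t; rw [h] at this; simp at this
    have hmul := LSeries_one_mul_Lseries_moebius (hre t)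
    rw [LSeries_one_eq_riemannZeta (hre t)] at hmul
    have hz : riemannZeta (κ + t * I) ≠ 0 := riemannZeta_ne_zero_of_one_le_re (hre t).le
    rw [e, eq_inv_of_mul_eq_one_right hmul, perronF, zetaReg_of_ne hs1]
    have := sub_ne_zero.2 hs1
    field_simp
  simp only [hlhs] at hsum
  have hval : ∀ n, ∫ t, F n t = if n ∈ Finset.Icc 1 ⌊x⌋₊ then
      2 * Real.pi * (((ArithmeticFunction.moebius n : ℝ) * (1 - n / x) : ℝ) : ℂ) else 0 := by
    intro n
    rcases eq_or_ne n 0 with rfl | hn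
    · simp [hF]
    · have hn0 : (0:ℝ) < n := by exact_mod_cast Nat.pos_of_ne_zero hn
      have hxn : 0 < n / x := by positivity
      have e : ∀ t, F n t = μ n * ((((n / x : ℝ)) : ℂ) ^ (-((κ : ℂ) + t * I)) *
          (1 / (((κ : ℂ) + t * I) * (κ + t * I + 1)))) := by
        intro t
        simp only [hF, LSeries.term_of_ne_zero hn]
        have : (((n / x : ℝ)) : ℂ) ^ (-((κ : ℂ) + t * I)) =
            (x : ℂ) ^ ((κ : ℂ) + t * I) / (n : ℂ) ^ ((κ : ℂ) + t * I) := by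
          have h2 : (x : ℂ) = ((n / x : ℝ) : ℂ)⁻¹ * ((n : ℝ) : ℂ) := by
            have : (x : ℂ) ≠ 0 := by exact_mod_cast hx.ne'
            have : (n : ℂ) ≠ 0 := by exact_mod_cast hn
            push_cast; field_simp
          have h3 : (n : ℂ) ^ ((κ : ℂ) + t * I) ≠ 0 := by
            simp [cpow_eq_zero_iff, hn]
          rw [cpow_neg, eq_div_iff h3, ← ofReal_natCast n]
          conv_rhs => rw [h2, ← ofReal_inv, mul_cpow_ofReal_nonneg (by positivity) (by positivity),
            ofReal_inv, inv_cpow _ _ (by rw [arg_ofReal_of_nonneg hxn.le]; exact Real.pi_pos.ne)]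
        rw [this]; ring
      simp only [e]
      rw [integral_const_mul, perron_kernel (by linarith) hxn]
      split_ifs with h
      · rw [Finset.mem_Icc, Nat.le_floor_iff hx.le] at h
        have : (n : ℝ) / x ≤ 1 := (div_le_one hx).2 h.2
        rw [max_eq_left (by linarith), hμ]; push_cast; ring
      · have : ¬ (n : ℝ) ≤ x := fun h' => h (Finset.mem_Icc.2 ⟨Nat.pos_of_ne_zero hn,
          (Nat.le_floor_iff hx.le).2 h'⟩)
        have : 1 < (n : ℝ) / x := (one_lt_div hx).2 (not_le.1 this)
        rw [max_eq_right (by linarith)]; simp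
  have hfin : HasSum (fun n => ∫ t, F n t) (∑ n ∈ Finset.Icc 1 ⌊x⌋₊, ∫ t, F n t) :=
    hasSum_sum_of_ne_finset_zero fun n hn => by rw [hval, if_neg hn]
  rw [hsum.unique hfin, ofReal_sum, Finset.mul_sum]
  exact Finset.sum_congr rfl fun n hn => by rw [hval, if_pos hn]

/-! ### Shifting the contour -/

/-- The integrand without `xˢ` is `≪ |t| ^ (-3 / 2)` in a region of the form `1 - c / logT t ≤ σ ≤ 2`. -/
lemma exists_perronF_bound : ∃ c C : ℝ, 0 < c ∧ c ≤ 1 / 4 ∧ 0 < C ∧ ∀ σ t : ℝ,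
    1 - c / logT t ≤ σ → σ ≤ 2 → zetaReg (σ + t * I) ≠ 0 ∧
      ‖perronF (σ + t * I)‖ ≤ C * (1 + t ^ 2) ^ (-(3 / 4) : ℝ) := by
  obtain ⟨c, C, hc, hc4, hC, h⟩ := exists_inv_zeta_bound
  refine ⟨c, 8 * C, hc, hc4, by positivity, fun σ t hσ hσ2 => ?_⟩
  obtain ⟨h0, h1⟩ := h σ t hσ hσ2
  refine ⟨h0, ?_⟩
  have hcL : c / logT t ≤ c := div_le_self hc.le (one_le_logT t)
  have h2 := one_add_sq_le_norm (σ := σ) (by linarith) t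
  have hz := norm_pos_iff.2 h0
  have ht : 0 < 1 + t ^ 2 := by positivity
  have h3 : Real.exp (logT t / 2) ≤ 2 * (1 + t ^ 2) ^ (1 / 4 : ℝ) := by
    have e1 : Real.exp (logT t / 2) = (|t| + 3) ^ (1 / 2 : ℝ) := by
      rw [Real.rpow_def_of_pos (by positivity), logT]; ring_nf
    have e2 : 2 * (1 + t ^ 2) ^ (1 / 4 : ℝ) = (16 * (1 + t ^ 2)) ^ (1 / 4 : ℝ) := by
      rw [Real.mul_rpow (by norm_num) ht.le]
      congr 1
      rw [show (16:ℝ) = 2 ^ (4:ℝ) by norm_num, ← Real.rpow_mul (by norm_num)]; norm_num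
    have e3 : (|t| + 3) ^ (1 / 2 : ℝ) = ((|t| + 3) ^ 2) ^ (1 / 4 : ℝ) := by
      rw [← Real.rpow_natCast, ← Real.rpow_mul (by positivity)]; norm_num
    rw [e1, e2, e3]
    gcongr
    have := sq_abs t
    nlinarith [abs_nonneg t]
  have h4 : (1 + t ^ 2) ^ (-(3 / 4) : ℝ) = (1 + t ^ 2) ^ (1 / 4 : ℝ) / (1 + t ^ 2) := by
    rw [show (-(3 / 4) : ℝ) = 1 / 4 - 1 by norm_num, Real.rpow_sub ht, Real.rpow_one]
  have h5 : ‖(σ : ℂ) + t * I - 1‖ / ‖zetaReg (σ + t * I)‖ ≤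
      C * (2 * (1 + t ^ 2) ^ (1 / 4 : ℝ)) := by
    rw [div_le_iff₀ hz]
    exact h1.trans (by gcongr)
  rw [perronF, norm_div, norm_div, h4, div_le_iff₀ (by linarith)]
  refine h5.trans ?_
  have h6 : 0 ≤ C * (1 + t ^ 2) ^ (1 / 4 : ℝ) := by positivity
  have e : 8 * C * ((1 + t ^ 2) ^ (1 / 4 : ℝ) / (1 + t ^ 2)) *
      ‖((σ : ℂ) + t * I) * (σ + t * I + 1)‖ =
      2 * (C * (1 + t ^ 2) ^ (1 / 4 : ℝ)) *
      ((4 * ‖((σ : ℂ) + t * I) * (σ + t * I + 1)‖) / (1 + t ^ 2)) := by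
    field_simp; ring
  rw [e]
  have : 1 ≤ (4 * ‖((σ : ℂ) + t * I) * (σ + t * I + 1)‖) / (1 + t ^ 2) := (one_le_div ht).2 h2
  nlinarith

lemma differentiableAt_perronF {s : ℂ} (hs : 0 < s.re) (h : zetaReg s ≠ 0) :
    DifferentiableAt ℂ perronF s := by
  have h1 : s ≠ 0 := by rintro rfl; simp at hs
  have h2 : s + 1 ≠ 0 := by intro h; have := congrArg re h; simp at this; linarith
  have := differentiable_zetaReg s
  unfold perronF
  refine DifferentiableAt.div (DifferentiableAt.div (by fun_prop) this h) (by fun_prop) ?_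
  exact mul_ne_zero h1 h2

lemma integrable_weight : Integrable fun t : ℝ => (1 + t ^ 2) ^ (-(5 / 8) : ℝ) := by
  have := integrable_rpow_neg_one_add_norm_sq (E := ℝ) (μ := volume) (r := 5 / 4) (by simp; norm_num)
  simpa [show (-(5 / 4) / 2 : ℝ) = -(5 / 8) by norm_num] using this

/-- Bound for the smoothed Möbius sum. With `T = exp √(log x)`, the part `|t| ≤ T` of the line
`re s = 1 + 1 / log x` is moved to `re s = 1 - c / (2 √(log x))`, where `|xˢ|` is
`x exp (-(c / 2) √(log x))`. The tails and the horizontal segments gain a power of `T` from the decay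
of the integrand: `(1 + t²) ^ (-3 / 4)` is split as `(1 + t²) ^ (-1 / 8)` times the integrable
weight `(1 + t²) ^ (-5 / 8)`. -/
lemma exists_smoothed_bound : ∃ c C : ℝ, 0 < c ∧ c ≤ 1 / 8 ∧ 0 < C ∧ ∀ x : ℝ, 3 ≤ x →
    |∑ n ∈ Finset.Icc 1 ⌊x⌋₊, (ArithmeticFunction.moebius n : ℝ) * (1 - n / x)| ≤
      C * x * Real.exp (-c * Real.sqrt (Real.log x)) := by
  obtain ⟨c, C, hc, hc4, hC, hF⟩ := exists_perronF_bound
  set w : ℝ → ℝ := fun t => (1 + t ^ 2) ^ (-(5 / 8) : ℝ) with hw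
  have hwint : Integrable w := integrable_weight
  have hwnn : ∀ t, 0 ≤ w t := fun t => by positivity
  set W := ∫ t, w t with hW
  have hW0 : 0 ≤ W := integral_nonneg hwnn
  refine ⟨c / 2, 12 * C + 4 * C * W, by positivity, by linarith, by positivity, fun x hx => ?_⟩
  have hx0 : 0 < x := by linarith
  have hl1 : 1 ≤ Real.log x := by
    rw [Real.le_log_iff_exp_le hx0]; linarith [Real.exp_one_lt_d9]
  set ℓ := Real.log x with hℓ
  have hℓ0 : 0 < ℓ := by linarith
  set q := Real.sqrt ℓ with hq
  have hq1 : 1 ≤ q := Real.one_le_sqrt.2 hl1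
  have hq0 : 0 < q := by linarith
  have hqq : q * q = ℓ := Real.mul_self_sqrt hℓ0.le
  set T := Real.exp q with hT
  have hT2 : 2 ≤ T := by linarith [Real.add_one_le_exp q]
  have hTe : Real.exp 1 ≤ T := Real.exp_le_exp.2 hq1
  set κ := 1 + 1 / ℓ with hκ
  have hκ1 : 1 < κ := by rw [hκ]; linarith [one_div_pos.2 hℓ0]
  have hκ2 : κ ≤ 2 := by
    have : 1 / ℓ ≤ 1 := (div_le_one hℓ0).2 hl1
    linarith
  set σ₁ := 1 - c / (2 * q) with hσ₁
  have hcq : c / (2 * q) ≤ c := div_le_self hc.le (by linarith)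
  have hcq0 : 0 < c / (2 * q) := by positivity
  -- the rectangle lies in the zero-free region
  have hreg : ∀ σ t : ℝ, σ₁ ≤ σ → |t| ≤ T → 1 - c / logT t ≤ σ := by
    intro σ t hσ ht
    have h1 : logT t ≤ 2 * q := by
      have : 2 * q = Real.log (T ^ 2) := by rw [Real.log_pow, hT, Real.log_exp]; norm_num
      rw [this, logT]
      apply Real.log_le_log (by positivity)
      have : 2.5 ≤ T := by linarith [Real.exp_one_gt_d9]
      nlinarith
    have := logT_pos t
    have : c / (2 * q) ≤ c / logT t := by gcongr
    linarith
  have hregκ : ∀ t : ℝ, 1 - c / logT t ≤ κ := by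
    intro t
    have := logT_pos t
    have : 0 < c / logT t := by positivity
    linarith
  set H : ℂ → ℂ := fun s => (x : ℂ) ^ s * perronF s with hH
  have hHd : ∀ s : ℂ, 0 < s.re → zetaReg s ≠ 0 → DifferentiableAt ℂ H s := by
    intro s hs hz
    refine DifferentiableAt.mul ?_ (differentiableAt_perronF hs hz)
    exact differentiableAt_id.const_cpow (Or.inl (by exact_mod_cast hx0.ne'))
  have hHn : ∀ σ t : ℝ, 1 - c / logT t ≤ σ → σ ≤ 2 →
      ‖H (σ + t * I)‖ ≤ x ^ σ * (C * (1 + t ^ 2) ^ (-(3 / 4) : ℝ)) := by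
    intro σ t hσ hσ2
    rw [hH, norm_mul, norm_cpow_eq_rpow_re_of_pos hx0]
    have : ((σ : ℂ) + t * I).re = σ := by simp
    rw [this]
    gcongr
    exact (hF σ t hσ hσ2).2
  have hxκ : x ^ κ ≤ 3 * x := by
    rw [hκ, Real.rpow_add hx0, Real.rpow_one, mul_comm]
    gcongr
    rw [Real.rpow_def_of_pos hx0, ← hℓ, mul_one_div_cancel hℓ0.ne']
    linarith [Real.exp_one_lt_d9]
  have hxσ : x ^ σ₁ = x * Real.exp (-(c / 2) * q) := by
    rw [Real.rpow_def_of_pos hx0, ← hℓ]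
    conv_rhs => rw [← Real.exp_log hx0, ← hℓ, ← Real.exp_add]
    congr 1
    rw [hσ₁, ← hqq]; field_simp; ring
  have h34 : ∀ t : ℝ, (1 + t ^ 2) ^ (-(3 / 4) : ℝ) = (1 + t ^ 2) ^ (-(1 / 8) : ℝ) * w t := by
    intro t
    rw [hw, ← Real.rpow_add (by positivity)]; norm_num
  have hE : (0:ℝ) < Real.exp (-(c / 2) * q) := Real.exp_pos _
  set E := Real.exp (-(c / 2) * q) with hEdef
  have h18 : ∀ t : ℝ, T ≤ |t| → (1 + t ^ 2) ^ (-(1 / 8) : ℝ) ≤ E := by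
    intro t ht
    have h1 : T ^ 2 ≤ 1 + t ^ 2 := by
      rw [← sq_abs t]; nlinarith
    calc (1 + t ^ 2) ^ (-(1 / 8) : ℝ) ≤ (T ^ 2) ^ (-(1 / 8) : ℝ) :=
          Real.rpow_le_rpow_of_nonpos (by positivity) h1 (by norm_num)
      _ = Real.exp (-(1 / 4) * q) := by
          rw [hT, ← Real.exp_nat_mul, ← Real.exp_mul]; congr 1; push_cast; ring
      _ ≤ E := Real.exp_le_exp.2 (by nlinarith)
  have h18' : ∀ t : ℝ, (1 + t ^ 2) ^ (-(1 / 8) : ℝ) ≤ 1 := fun t =>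
    Real.rpow_le_one_of_one_le_of_nonpos (by nlinarith) (by norm_num)
  have hw1 : ∀ t : ℝ, w t ≤ 1 := fun t =>
    Real.rpow_le_one_of_one_le_of_nonpos (by nlinarith) (by norm_num)
  have hlineint : Integrable fun t : ℝ => H (κ + t * I) := by
    refine (hwint.const_mul (x ^ κ * C)).mono' ?_ (ae_of_all _ fun t => ?_)
    · apply Continuous.aestronglyMeasurable
      rw [continuous_iff_continuousAt]
      intro t
      have h1 : ContinuousAt H (κ + t * I) :=
        (hHd _ (by simp; linarith) (zetaReg_ne_zero (by simpa using hκ1.le))).continuousAt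
      exact ContinuousAt.comp (f := fun t : ℝ => (κ : ℂ) + t * I) h1 (by fun_prop)
    · refine (hHn κ t (hregκ t) hκ2).trans ?_
      rw [h34, mul_assoc]
      gcongr
      exact mul_le_of_le_one_left (hwnn t) (h18' t)
  have htail : ‖∫ t in (Set.Ioc (-T) T)ᶜ, H (κ + t * I)‖ ≤ 3 * x * C * E * W := by
    calc ‖∫ t in (Set.Ioc (-T) T)ᶜ, H (κ + t * I)‖
        ≤ ∫ t in (Set.Ioc (-T) T)ᶜ, 3 * x * C * E * w t := by
          refine norm_integral_le_of_norm_le (hwint.const_mul _).integrableOn ?_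
          refine (ae_restrict_iff' measurableSet_Ioc.compl).2 (ae_of_all _ fun t ht => ?_)
          have hTt : T ≤ |t| := by
            by_contra hcon
            push Not at hcon
            rw [abs_lt] at hcon
            exact ht ⟨hcon.1, hcon.2.le⟩
          refine (hHn κ t (hregκ t) hκ2).trans ?_
          rw [h34]
          calc x ^ κ * (C * ((1 + t ^ 2) ^ (-(1 / 8) : ℝ) * w t))
              ≤ (3 * x) * (C * (E * w t)) := by
                gcongr
                exact h18 t hTt
            _ = _ := by ring
      _ ≤ ∫ t, 3 * x * C * E * w t :=
          setIntegral_le_integral (hwint.const_mul _) (ae_of_all _ fun t => by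
            have := hwnn t
            positivity)
      _ = _ := by rw [integral_const_mul]
  have hleft : ‖∫ t in (-T)..T, H (σ₁ + t * I)‖ ≤ x * E * C * W := by
    calc ‖∫ t in (-T)..T, H (σ₁ + t * I)‖
        ≤ ∫ t in (-T)..T, x * E * C * w t := by
          refine intervalIntegral.norm_integral_le_of_norm_le (by linarith)
            (ae_of_all _ fun t ht => ?_) (hwint.const_mul _).intervalIntegrable
          refine (hHn σ₁ t (hreg σ₁ t le_rfl (abs_le.2 ⟨ht.1.le, ht.2⟩)) (by linarith)).trans ?_
          rw [h34, hxσ, mul_assoc (x * E)]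
          gcongr
          exact mul_le_of_le_one_left (hwnn t) (h18' t)
      _ ≤ ∫ t, x * E * C * w t := by
          rw [intervalIntegral.integral_of_le (by linarith)]
          exact setIntegral_le_integral (hwint.const_mul _) (ae_of_all _ fun t => by
            have := hwnn t
            positivity)
      _ = _ := by rw [integral_const_mul]
  have hhor : ∀ u : ℝ, |u| = T → ‖∫ σ in σ₁..κ, H (σ + u * I)‖ ≤ 6 * x * C * E := by
    intro u hu
    have h1 := intervalIntegral.norm_integral_le_of_norm_le_const (a := σ₁) (b := κ)
      (f := fun σ : ℝ => H (σ + u * I)) (C := 3 * x * C * E) (fun σ hσ => by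
        rw [Set.uIoc_of_le (by linarith)] at hσ
        refine (hHn σ u (hreg σ u hσ.1.le hu.le) (hσ.2.trans hκ2)).trans ?_
        have h2 : x ^ σ ≤ 3 * x :=
          (Real.rpow_le_rpow_of_exponent_le (by linarith) hσ.2).trans hxκ
        rw [h34]
        calc x ^ σ * (C * ((1 + u ^ 2) ^ (-(1 / 8) : ℝ) * w u))
              ≤ (3 * x) * (C * (E * 1)) := by
                gcongr
                · exact h18 u hu.ge
                · exact hw1 u
            _ = _ := by ring)
    refine h1.trans ?_
    have : |κ - σ₁| ≤ 2 := by rw [abs_le]; constructor <;> linarith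
    have h3 : 0 ≤ 3 * x * C * E := by positivity
    nlinarith
  have hrect := integral_boundary_rect_eq_zero_of_differentiableOn H
    ((σ₁ : ℂ) + (-T : ℝ) * I) ((κ : ℂ) + T * I) (by
      intro s hs
      rw [mem_reProdIm] at hs
      simp only [add_re, add_im, ofReal_re, ofReal_im, mul_re, mul_im, I_re, I_im, mul_zero,
        mul_one, sub_zero, add_zero, zero_add] at hs
      rw [Set.uIcc_of_le (by linarith), Set.uIcc_of_le (by linarith)] at hs
      apply DifferentiableAt.differentiableWithinAt
      apply hHd
      · linarith [hs.1.1]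
      · have := (hF s.re s.im (hreg _ _ hs.1.1 (abs_le.2 hs.2)) (hs.1.2.trans hκ2)).1
        rwa [re_add_im] at this)
  simp only [add_re, add_im, ofReal_re, ofReal_im, mul_re, mul_im, I_re, I_im, mul_zero,
        mul_one, sub_zero, add_zero, zero_add] at hrect
  have hright : ‖∫ t in (-T)..T, H (κ + t * I)‖ ≤ 12 * x * C * E + x * E * C * W := by
    set a := ∫ σ in σ₁..κ, H (σ + (-T : ℝ) * I) with ha
    set b := ∫ σ in σ₁..κ, H (σ + T * I) with hb
    set d := ∫ t in (-T)..T, H (σ₁ + t * I) with hd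
    set r := ∫ t in (-T)..T, H (κ + t * I) with hr
    have e : I * r = b - a + I * d := by
      simp only [smul_eq_mul] at hrect
      linear_combination hrect
    have e2 : ‖r‖ = ‖b - a + I * d‖ := by rw [← e, norm_mul, norm_I, one_mul]
    rw [e2]
    have h1 := norm_add_le (b - a) (I * d)
    have h2 := norm_sub_le b a
    rw [norm_mul, norm_I, one_mul] at h1
    have h3 := hhor (-T) (by rw [abs_neg, abs_of_pos (by linarith)])
    have h4 := hhor T (abs_of_pos (by linarith))
    linarith
  have hsplit := integral_add_compl (μ := volume) (f := fun t : ℝ => H (κ + t * I))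
    (measurableSet_Ioc (a := -T) (b := T)) hlineint
  rw [← intervalIntegral.integral_of_le (by linarith)] at hsplit
  have hper := perron_moebius hκ1 hx0
  rw [← hH] at *
  have htot : ‖∫ t : ℝ, H (κ + t * I)‖ ≤ 12 * x * C * E + x * E * C * W + 3 * x * C * E * W := by
    rw [← hsplit]
    exact (norm_add_le _ _).trans (add_le_add hright htail)
  have hper' : ∫ t : ℝ, H (κ + t * I) = 2 * Real.pi * ((∑ n ∈ Finset.Icc 1 ⌊x⌋₊,
        (ArithmeticFunction.moebius n : ℝ) * (1 - n / x) : ℝ) : ℂ) := hper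
  rw [hper', norm_mul, norm_real, Real.norm_eq_abs] at htot
  have hpi : ‖(2 * Real.pi : ℂ)‖ = 2 * Real.pi := by
    rw [norm_mul, norm_real, Real.norm_eq_abs, abs_of_pos Real.pi_pos]; simp
  rw [hpi] at htot
  have h3 := Real.pi_gt_three
  have h0 := abs_nonneg (∑ n ∈ Finset.Icc 1 ⌊x⌋₊, (ArithmeticFunction.moebius n : ℝ) * (1 - n / x))
  nlinarith

end

/-! ### The Mertens function -/

/-- The Mertens function `M(x) = ∑ μ(n)` over `n ≤ x`. -/
noncomputable def mertens (x : ℝ) : ℝ :=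
  ∑ n ∈ Finset.Icc 1 ⌊x⌋₊, (ArithmeticFunction.moebius n : ℝ)

lemma abs_moebius_le_one_real (n : ℕ) : |(ArithmeticFunction.moebius n : ℝ)| ≤ 1 := by
  have := ArithmeticFunction.abs_moebius_le_one (n := n)
  exact_mod_cast this

lemma abs_mertens_le {x : ℝ} (hx : 0 ≤ x) : |mertens x| ≤ x := by
  calc |mertens x| ≤ ∑ n ∈ Finset.Icc 1 ⌊x⌋₊, |(ArithmeticFunction.moebius n : ℝ)| :=
        Finset.abs_sum_le_sum_abs _ _
    _ ≤ ∑ n ∈ Finset.Icc 1 ⌊x⌋₊, (1:ℝ) :=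
        Finset.sum_le_sum fun n _ => abs_moebius_le_one_real n
    _ = ⌊x⌋₊ := by simp
    _ ≤ x := Nat.floor_le hx

/-- A difference quotient of `∑ μ(n) (x - n)₊` recovers `M(x)` up to the terms with `x < n ≤ x + h`. -/
lemma mertens_unsmooth {x h : ℝ} (hx : 0 < x) (hh : 0 < h) :
    h * |mertens x| ≤
      |∑ n ∈ Finset.Icc 1 ⌊x + h⌋₊, (ArithmeticFunction.moebius n : ℝ) * (x + h - n)| +
      |∑ n ∈ Finset.Icc 1 ⌊x⌋₊, (ArithmeticFunction.moebius n : ℝ) * (x - n)| + h * (h + 1) := by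
  have hle : ⌊x⌋₊ ≤ ⌊x + h⌋₊ := Nat.floor_le_floor (by linarith)
  have hI : ∀ N : ℕ, Finset.Icc 1 N = Finset.Ioc 0 N := fun N => by ext; simp; omega
  have e : h * mertens x =
      (∑ n ∈ Finset.Icc 1 ⌊x + h⌋₊, (ArithmeticFunction.moebius n : ℝ) * (x + h - n)) -
      (∑ n ∈ Finset.Icc 1 ⌊x⌋₊, (ArithmeticFunction.moebius n : ℝ) * (x - n)) -
      ∑ n ∈ Finset.Ioc ⌊x⌋₊ ⌊x + h⌋₊, (ArithmeticFunction.moebius n : ℝ) * (x + h - n) := by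
    rw [mertens, hI, hI, ← Finset.sum_Ioc_consecutive _ (Nat.zero_le _) hle, Finset.mul_sum]
    rw [add_sub_right_comm, add_sub_cancel_right, ← Finset.sum_sub_distrib]
    exact Finset.sum_congr rfl fun n _ => by ring
  have h3 : |∑ n ∈ Finset.Ioc ⌊x⌋₊ ⌊x + h⌋₊, (ArithmeticFunction.moebius n : ℝ) * (x + h - n)|
      ≤ h * (h + 1) := by
    calc _ ≤ ∑ n ∈ Finset.Ioc ⌊x⌋₊ ⌊x + h⌋₊,
          |(ArithmeticFunction.moebius n : ℝ) * (x + h - n)| := Finset.abs_sum_le_sum_abs _ _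
      _ ≤ ∑ n ∈ Finset.Ioc ⌊x⌋₊ ⌊x + h⌋₊, h := by
          refine Finset.sum_le_sum fun n hn => ?_
          rw [Finset.mem_Ioc, Nat.floor_lt hx.le, Nat.le_floor_iff (by linarith)] at hn
          rw [abs_mul, ← one_mul h]
          gcongr
          · exact abs_moebius_le_one_real n
          · rw [abs_le]; constructor <;> linarith
      _ = ((⌊x + h⌋₊ : ℝ) - ⌊x⌋₊) * h := by
          rw [Finset.sum_const, Nat.card_Ioc, nsmul_eq_mul, Nat.cast_sub hle]
      _ ≤ (h + 1) * h := by
          gcongr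
          have := Nat.floor_le (show 0 ≤ x + h by linarith)
          have := Nat.lt_floor_add_one x
          linarith
      _ = _ := by ring
  rw [← abs_of_pos hh, ← abs_mul, abs_of_pos hh, e]
  refine (abs_sub _ _).trans (add_le_add ((abs_sub _ _).trans le_rfl) h3)

/-- The prime number theorem for the Möbius function with the classical error term. In
`mertens_unsmooth` the step is `h = x exp (-(c / 2) √(log x))`, the square root of the saving in the
smoothed bound. -/
lemma exists_mertens_bound : ∃ c C : ℝ, 0 < c ∧ c ≤ 1 / 16 ∧ 0 < C ∧ ∀ x : ℝ, 1 ≤ x →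
    |mertens x| ≤ C * x * Real.exp (-c * Real.sqrt (Real.log x)) := by
  obtain ⟨c, C, hc, hc8, hC, hb⟩ := exists_smoothed_bound
  refine ⟨c / 2, 5 * C + 2, by positivity, by linarith, by positivity, fun x hx => ?_⟩
  have hx0 : 0 < x := by linarith
  rcases lt_or_ge x 3 with hx3 | hx3
  · have h1 := abs_mertens_le hx0.le
    have h2 : Real.sqrt (Real.log x) ≤ 2 := by
      rw [Real.sqrt_le_left (by norm_num)]
      linarith [Real.log_le_sub_one_of_pos hx0]
    have h3 : (1:ℝ) / 2 ≤ Real.exp (-(c / 2) * Real.sqrt (Real.log x)) := by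
      have := Real.add_one_le_exp (-(c / 2) * Real.sqrt (Real.log x))
      nlinarith [Real.sqrt_nonneg (Real.log x)]
    have : x ≤ (2 * x) * Real.exp (-(c / 2) * Real.sqrt (Real.log x)) := by nlinarith
    refine h1.trans (this.trans ?_)
    gcongr
    linarith
  · have hl1 : 1 ≤ Real.log x := by
      rw [Real.le_log_iff_exp_le hx0]; linarith [Real.exp_one_lt_d9]
    have hM1 : ∀ z : ℝ, 3 ≤ z →
        |∑ n ∈ Finset.Icc 1 ⌊z⌋₊, (ArithmeticFunction.moebius n : ℝ) * (z - n)| ≤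
        C * z ^ 2 * Real.exp (-c * Real.sqrt (Real.log z)) := by
      intro z hz
      have hz0 : 0 < z := by linarith
      have e : ∑ n ∈ Finset.Icc 1 ⌊z⌋₊, (ArithmeticFunction.moebius n : ℝ) * (z - n) =
          z * ∑ n ∈ Finset.Icc 1 ⌊z⌋₊, (ArithmeticFunction.moebius n : ℝ) * (1 - n / z) := by
        rw [Finset.mul_sum]
        exact Finset.sum_congr rfl fun n _ => by field_simp
      rw [e, abs_mul, abs_of_pos hz0]
      have := hb z hz
      nlinarith
    set q := Real.sqrt (Real.log x) with hq
    have hq1 : 1 ≤ q := Real.one_le_sqrt.2 hl1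
    have hqq : q * q = Real.log x := Real.mul_self_sqrt (by linarith)
    set E := Real.exp (-(c / 2) * q) with hE
    have hE0 : 0 < E := Real.exp_pos _
    have hE1 : E ≤ 1 := Real.exp_le_one_iff.2 (by nlinarith)
    have hEE : Real.exp (-c * q) = E * E := by rw [hE, ← Real.exp_add]; ring_nf
    -- so that `h * (h + 1) ≤ 2 * h ^ 2` for the step `h = x * E`
    have hxE : 1 ≤ x * E := by
      rw [← Real.exp_log hx0, hE, ← Real.exp_add]
      apply Real.one_le_exp
      rw [← hqq]; nlinarith
    have hh : 0 < x * E := by positivity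
    have hhx : x * E ≤ x := mul_le_of_le_one_right hx0.le hE1
    have h1 := mertens_unsmooth hx0 hh
    have h2 := hM1 x hx3
    have h3 := hM1 (x + x * E) (by linarith)
    rw [← hq, hEE] at h2
    have h4 : C * (x + x * E) ^ 2 * Real.exp (-c * Real.sqrt (Real.log (x + x * E))) ≤
        C * (2 * x) ^ 2 * (E * E) := by
      rw [← hEE]
      gcongr ?_ * ?_ * ?_
      · gcongr; linarith
      · apply Real.exp_le_exp.2
        have : q ≤ Real.sqrt (Real.log (x + x * E)) := by
          rw [hq]; gcongr; linarith
        nlinarith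
    have h5 : x * E * |mertens x| ≤ x * E * ((5 * C + 2) * x * E) := by
      nlinarith
    exact le_of_mul_le_mul_left h5 hh

/-! ### Sums over rough numbers -/

/-- The sum of `μ(k)` over `1 ≤ k ≤ N` all of whose prime factors exceed `n`. -/
noncomputable def roughSum (n N : ℕ) : ℝ :=
  ∑ k ∈ (Finset.Icc 1 N).filter (fun k => ∀ p ∈ k.primeFactors, n < p),
    (ArithmeticFunction.moebius k : ℝ)

lemma roughSum_zero (x : ℝ) : roughSum 0 ⌊x⌋₊ = mertens x := by
  rw [roughSum, mertens, Finset.filter_true_of_mem]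
  intro k _ p hp
  exact (Nat.prime_of_mem_primeFactors hp).pos

lemma roughSum_succ_of_not_prime {n : ℕ} (h : ¬ (n + 1).Prime) (N : ℕ) :
    roughSum (n + 1) N = roughSum n N := by
  unfold roughSum
  congr 1
  apply Finset.filter_congr
  intro k _
  refine forall₂_congr fun p hp => ?_
  have : p ≠ n + 1 := by rintro rfl; exact h (Nat.prime_of_mem_primeFactors hp)
  omega

/-- Sieving by the prime `p = n + 1`: a squarefree `k` divisible by `p` is `p m` with `p ∤ m`, and then
`μ(k) = -μ(m)`. -/
lemma roughSum_of_prime {n : ℕ} (h : (n + 1).Prime) (N : ℕ) :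
    roughSum n N = roughSum (n + 1) N - roughSum (n + 1) (N / (n + 1)) := by
  unfold roughSum
  set A := (Finset.Icc 1 N).filter (fun k => ∀ p ∈ k.primeFactors, n < p) with hA
  set B := (Finset.Icc 1 (N / (n + 1))).filter (fun k => ∀ p ∈ k.primeFactors, n + 1 < p) with hB
  have hcop : ∀ m ∈ B, (n + 1).Coprime m := by
    intro m hm
    rw [hB, Finset.mem_filter, Finset.mem_Icc] at hm
    rw [Nat.Prime.coprime_iff_not_dvd h]
    intro hd
    exact lt_irrefl _ (hm.2 _ (Nat.mem_primeFactors.2 ⟨h, hd, by omega⟩))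
  rw [← Finset.sum_filter_not_add_sum_filter A (fun k => (n + 1) ∣ k), sub_eq_add_neg]
  congr 1
  · congr 1
    ext k
    simp only [hA, Finset.mem_filter, Finset.mem_Icc]
    constructor
    · rintro ⟨⟨h1, h2⟩, h3⟩
      refine ⟨h1, fun p hp => lt_of_le_of_ne (h2 p hp) ?_⟩
      rintro rfl
      exact h3 (Nat.dvd_of_mem_primeFactors hp)
    · rintro ⟨h1, h2⟩
      refine ⟨⟨h1, fun p hp => by have := h2 p hp; omega⟩, fun hd => ?_⟩
      exact lt_irrefl _ (h2 _ (Nat.mem_primeFactors.2 ⟨h, hd, by omega⟩))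
  · rw [← Finset.sum_neg_distrib]
    have h1 : ∑ m ∈ B, -(ArithmeticFunction.moebius m : ℝ) =
        ∑ k ∈ B.image (fun m => (n + 1) * m), (ArithmeticFunction.moebius k : ℝ) := by
      rw [Finset.sum_image (fun a _ b _ hab => Nat.eq_of_mul_eq_mul_left h.pos hab)]
      refine Finset.sum_congr rfl fun m hm => ?_
      rw [ArithmeticFunction.isMultiplicative_moebius.map_mul_of_coprime (hcop m hm),
        ArithmeticFunction.moebius_apply_prime h]
      push_cast; ring
    rw [h1]
    symm
    apply Finset.sum_subset
    · intro k hk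
      obtain ⟨m, hm, rfl⟩ := Finset.mem_image.1 hk
      rw [hB, Finset.mem_filter, Finset.mem_Icc, Nat.le_div_iff_mul_le h.pos] at hm
      rw [Finset.mem_filter, hA, Finset.mem_filter, Finset.mem_Icc]
      refine ⟨⟨⟨Nat.mul_pos h.pos hm.1.1, by linarith [hm.1.2]⟩, fun p hp => ?_⟩, dvd_mul_right _ _⟩
      rw [Nat.primeFactors_mul h.ne_zero (by omega), Finset.mem_union, h.primeFactors,
        Finset.mem_singleton] at hp
      rcases hp with rfl | hp
      · omega
      · have := hm.2 p hp; omega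
    · intro k hk hk'
      rw [Finset.mem_filter, hA, Finset.mem_filter, Finset.mem_Icc] at hk
      obtain ⟨⟨⟨hk1, hk2⟩, hk3⟩, m, rfl⟩ := hk
      have hm0 : 0 < m := Nat.pos_of_mul_pos_left hk1
      have hnsq : ¬ Squarefree ((n + 1) * m) := by
        intro hsq
        apply hk'
        refine Finset.mem_image.2 ⟨m, ?_, rfl⟩
        rw [hB, Finset.mem_filter, Finset.mem_Icc, Nat.le_div_iff_mul_le h.pos]
        refine ⟨⟨hm0, by linarith⟩, fun p hp => ?_⟩
        refine lt_of_le_of_ne (hk3 p ?_) ?_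
        · rw [Nat.primeFactors_mul h.ne_zero (by omega)]
          exact Finset.mem_union_right _ hp
        · rintro rfl
          have hc := Nat.coprime_of_squarefree_mul hsq
          exact (Nat.Prime.coprime_iff_not_dvd h).1 hc (Nat.dvd_of_mem_primeFactors hp)
      rw [ArithmeticFunction.moebius_eq_zero_of_not_squarefree hnsq]; simp

/-- Replacing `x` by `x / p` shrinks the majorant by a fixed factor `3 / 4`, because
`√(log x) ≤ √(log (x / p)) + √(log p)` and `c` is small. -/
lemma decay_div_le {c : ℝ} (hc : 0 ≤ c) (hc16 : c ≤ 1 / 16) {x p : ℝ} (hp : 2 ≤ p) (hpx : p ≤ x) :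
    x / p * Real.exp (-c * Real.sqrt (Real.log (x / p))) ≤
      3 / 4 * (x * Real.exp (-c * Real.sqrt (Real.log x))) := by
  have hp0 : 0 < p := by linarith
  have hx0 : 0 < x := by linarith
  have hlp : 0.69 ≤ Real.log p := by
    have := Real.log_le_log (by norm_num) hp
    linarith [Real.log_two_gt_d9]
  have hlx : Real.log (x / p) = Real.log x - Real.log p := Real.log_div hx0.ne' hp0.ne'
  have h0 : 0 ≤ Real.log (x / p) := Real.log_nonneg ((one_le_div hp0).2 hpx)
  have h1 : Real.sqrt (Real.log x) ≤ Real.sqrt (Real.log (x / p)) + Real.sqrt (Real.log p) := by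
    rw [Real.sqrt_le_left (by positivity)]
    have h5 := Real.sq_sqrt h0
    have h6 := Real.sq_sqrt (show 0 ≤ Real.log p by linarith)
    have h7 : 0 ≤ Real.sqrt (Real.log (x / p)) * Real.sqrt (Real.log p) := by positivity
    nlinarith
  have h2 : Real.sqrt (Real.log p) ≤ (1 + Real.log p) / 2 := by
    have := Real.sq_sqrt (show 0 ≤ Real.log p by linarith)
    nlinarith [sq_nonneg (Real.sqrt (Real.log p) - 1)]
  have h3 : Real.exp (-(1 / 2)) ≤ 3 / 4 := by
    rw [Real.exp_neg]
    have := Real.add_one_le_exp (1 / 2 : ℝ)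
    calc (Real.exp (1 / 2))⁻¹ ≤ (3 / 2 : ℝ)⁻¹ := by gcongr; linarith
      _ ≤ 3 / 4 := by norm_num
  have e : x / p = x * Real.exp (-Real.log p) := by
    rw [Real.exp_neg, Real.exp_log hp0, div_eq_mul_inv]
  calc x / p * Real.exp (-c * Real.sqrt (Real.log (x / p)))
      = x * Real.exp (-Real.log p + -c * Real.sqrt (Real.log (x / p))) := by
        rw [Real.exp_add, ← mul_assoc, ← e]
    _ ≤ x * Real.exp (-(1 / 2) + -c * Real.sqrt (Real.log x)) := by
        refine mul_le_mul_of_nonneg_left (Real.exp_le_exp.2 ?_) hx0.le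
        have h4 : c * Real.sqrt (Real.log x) ≤
            c * Real.sqrt (Real.log (x / p)) + 1 / 16 * Real.sqrt (Real.log p) := by
          have := mul_le_mul_of_nonneg_left h1 hc
          have := mul_le_mul_of_nonneg_right hc16 (Real.sqrt_nonneg (Real.log p))
          linarith
        linarith
    _ = Real.exp (-(1 / 2)) * (x * Real.exp (-c * Real.sqrt (Real.log x))) := by
        rw [Real.exp_add]; ring
    _ ≤ _ := by gcongr

/-- The bound for rough sums, with `c` independent of `n`. At a prime `p = n + 1` one iterates
`S_p(x) = S_n(x) + S_p(x / p)`; the constant is multiplied by `4 = 1 / (1 - 3 / 4)`. -/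
lemma exists_roughSum_bound : ∃ c : ℝ, 0 < c ∧ ∀ n : ℕ, ∃ C : ℝ, 0 < C ∧ ∀ x : ℝ, 1 ≤ x →
    |roughSum n ⌊x⌋₊| ≤ C * (x * Real.exp (-c * Real.sqrt (Real.log x))) := by
  obtain ⟨c, C₀, hc, hc16, hC₀, hb⟩ := exists_mertens_bound
  refine ⟨c, hc, fun n => ?_⟩
  induction n with
  | zero => exact ⟨C₀, hC₀, fun x hx => by rw [roughSum_zero, ← mul_assoc]; exact hb x hx⟩
  | succ n ih =>
    obtain ⟨C, hC, hn⟩ := ih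
    by_cases hp : (n + 1).Prime
    · refine ⟨4 * C, by positivity, ?_⟩
      suffices H : ∀ N : ℕ, ∀ x : ℝ, 1 ≤ x → ⌊x⌋₊ = N → |roughSum (n + 1) ⌊x⌋₊| ≤
          4 * C * (x * Real.exp (-c * Real.sqrt (Real.log x))) from fun x hx => H _ x hx rfl
      intro N
      induction N using Nat.strong_induction_on with
      | _ N ihN =>
        intro x hx hxN
        have hx0 : 0 < x := by linarith
        have hp2 : (2:ℝ) ≤ ((n + 1 : ℕ) : ℝ) := by exact_mod_cast hp.two_le
        have hrec := roughSum_of_prime hp ⌊x⌋₊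
        rw [← Nat.floor_div_natCast] at hrec
        have h1 := hn x hx
        have h2 : |roughSum (n + 1) ⌊x⌋₊| ≤ |roughSum n ⌊x⌋₊| +
            |roughSum (n + 1) ⌊x / ((n + 1 : ℕ) : ℝ)⌋₊| := by
          have e : roughSum (n + 1) ⌊x⌋₊ = roughSum n ⌊x⌋₊ +
            roughSum (n + 1) ⌊x / ((n + 1 : ℕ) : ℝ)⌋₊ := by linarith
          rw [e]; exact abs_add_le _ _
        have hg : 0 < x * Real.exp (-c * Real.sqrt (Real.log x)) := by positivity
        rcases lt_or_ge x ((n + 1 : ℕ) : ℝ) with hlt | hge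
        · have e0 : ⌊x / ((n + 1 : ℕ) : ℝ)⌋₊ = 0 :=
            Nat.floor_eq_zero.2 ((div_lt_one (by linarith)).2 hlt)
          have e1 : roughSum (n + 1) 0 = 0 := by simp [roughSum]
          rw [e0, e1, abs_zero] at h2
          nlinarith
        · have hlt : ⌊x / ((n + 1 : ℕ) : ℝ)⌋₊ < N := by
            rw [Nat.floor_div_natCast, hxN]
            have : 0 < N := by rw [← hxN]; exact Nat.floor_pos.2 hx
            exact Nat.div_lt_self this hp.one_lt
          have h3 := ihN _ hlt _ ((one_le_div (by linarith)).2 hge) rfl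
          have h4 := decay_div_le hc.le hc16 hp2 hge
          have h5 := mul_le_mul_of_nonneg_left h4 (show 0 ≤ 4 * C by positivity)
          linarith
    · exact ⟨C, hC, fun x hx => by rw [roughSum_succ_of_not_prime hp]; exact hn x hx⟩

open Finset

theorem moebius_sum_rough_bound (y : ℝ) (hy : 1 ≤ y) :
    ∃ C > 0, ∃ c > 0, ∀ x : ℝ, 2 ≤ x →
      |(∑ n ∈ (Finset.Icc 1 ⌊x⌋₊).filter (fun n => ∀ p : ℕ, p ∈ n.primeFactors → y < (p : ℝ)),
          (ArithmeticFunction.moebius n : ℝ))|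
        ≤ C * x * Real.exp (-c * Real.sqrt (Real.log x)) := by
  obtain ⟨c, hc, h⟩ := exists_roughSum_bound
  obtain ⟨C, hC, hb⟩ := h ⌊y⌋₊
  refine ⟨C, hC, c, hc, fun x hx => ?_⟩
  have h1 := hb x (by linarith)
  rw [← mul_assoc] at h1
  -- for integers `p`, the condition `y < p` is `⌊y⌋₊ < p`
  have e : (Finset.Icc 1 ⌊x⌋₊).filter (fun n => ∀ p : ℕ, p ∈ n.primeFactors → y < (p : ℝ)) =
      (Finset.Icc 1 ⌊x⌋₊).filter (fun k => ∀ p ∈ k.primeFactors, ⌊y⌋₊ < p) := by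
    apply Finset.filter_congr
    intro k _
    exact forall₂_congr fun p _ => (Nat.floor_lt (by linarith)).symm
  rw [e]
  exact h1
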